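/- arXiv:1705.07193 — 9 statements merged into one kernel-verified Lean document; each statement's English description precedes it below -/
import Mathlib

section
/- Let D, N, t be positive integers with D ≪ N and let f be a sieve function of range D. Then, uniformly in a ∈ ℤ, Σ_{n ≤ N, n ≡ a (mod t)} f(n) = (N/t)·Σ_{k | t} 𝑓̂(k)·c_k(a) + O_ε(D^{1+ε}) for every ε > 0. -/
/-- The Ramanujan sum `c_q(n) = ∑_{d ∣ gcd(q,n)} d · μ(q/d)`. -/
def ramanujanSum (q : ℕ) (n : ℤ) : ℤ :=
  ∑ d ∈ (Nat.gcd q n.natAbs).divisors, (d : ℤ) * ArithmeticFunction.moebius (q / d)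

theorem ram_aux_divisors (a : ℤ) (g : ℕ) (hg : 0 < g) :
    ∑ k ∈ g.divisors, ramanujanSum k a = if (g : ℤ) ∣ a then (g : ℤ) else 0 := by
  refine (ArithmeticFunction.sum_eq_iff_sum_mul_moebius_eq (R := ℤ)
    (f := fun k => ramanujanSum k a)
    (g := fun g : ℕ => if (g : ℤ) ∣ a then (g : ℤ) else 0)).2 ?_ g hg
  intro n hn
  simp only [Int.cast_id]
  rw [Nat.sum_divisorsAntidiagonal' (f := fun x y =>
    ((ArithmeticFunction.moebius x : ℤ) : ℤ) * (if (y : ℤ) ∣ a then (y : ℤ) else 0))]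
  have h1 : (Nat.gcd n a.natAbs).divisors = n.divisors.filter (fun d : ℕ => (d : ℤ) ∣ a) := by
    ext d
    simp only [Nat.mem_divisors, Finset.mem_filter, Nat.dvd_gcd_iff, Int.natCast_dvd]
    have : n.gcd a.natAbs ≠ 0 := (Nat.gcd_pos_of_pos_left _ hn).ne'
    have := hn.ne'
    tauto
  unfold ramanujanSum
  rw [h1, Finset.sum_filter]
  refine Finset.sum_congr rfl fun d _ => ?_
  split_ifs
  · simp [mul_comm]
  · simp

theorem ram_aux_count (N d t : ℕ) (a : ℤ) (hd : 0 < d) (ht : 0 < t) :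
    |((((Finset.Icc 1 N).filter (fun n : ℕ => d ∣ n ∧ (n : ℤ) ≡ a [ZMOD (t : ℤ)])).card : ℕ) : ℝ)
      - (N : ℝ) / t * ((if ((Nat.gcd d t : ℕ) : ℤ) ∣ a then ((Nat.gcd d t : ℕ) : ℝ) else 0) / d)|
      ≤ 1 := by
  split_ifs with h
  · have hlcm : 0 < Nat.lcm d t := Nat.lcm_pos hd ht
    obtain ⟨b, hb⟩ : ∃ b : ℕ, (b : ℤ) ≡ a [ZMOD (t : ℤ)] := by
      have ht0 : (t : ℤ) ≠ 0 := by exact_mod_cast ht.ne'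
      refine ⟨(a % t).toNat, ?_⟩
      rw [Int.toNat_of_nonneg (Int.emod_nonneg _ ht0)]
      exact Int.mod_modEq _ _
    have hgb : Nat.gcd d t ∣ b := by
      have h2 : ((Nat.gcd d t : ℕ) : ℤ) ∣ a - b :=
        (Int.natCast_dvd_natCast.2 (Nat.gcd_dvd_right d t)).trans hb.dvd
      exact Int.natCast_dvd_natCast.1 ((dvd_iff_dvd_of_dvd_sub h2).1 h)
    obtain ⟨v, hv1, hv2⟩ := Nat.chineseRemainder' (n := d) (m := t) (a := 0) (b := b)
      ((Nat.modEq_zero_iff_dvd.2 hgb).symm)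
    have hset : (Finset.Icc 1 N).filter (fun n : ℕ => d ∣ n ∧ (n : ℤ) ≡ a [ZMOD (t : ℤ)])
        = (Finset.Ioc 0 N).filter (fun n : ℕ => n ≡ v [MOD Nat.lcm d t]) := by
      ext n
      simp only [Finset.mem_filter, Finset.mem_Icc, Finset.mem_Ioc]
      refine and_congr (by omega) ⟨?_, ?_⟩
      · rintro ⟨h1, h2⟩
        refine Nat.mod_lcm ((Nat.modEq_zero_iff_dvd.2 h1).trans hv1.symm) ?_
        exact (Int.natCast_modEq_iff.1 (h2.trans hb.symm)).trans hv2.symm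
      · intro h1
        refine ⟨Nat.modEq_zero_iff_dvd.1 ((h1.of_dvd (Nat.dvd_lcm_left d t)).trans hv1), ?_⟩
        exact (Int.natCast_modEq_iff.2 ((h1.of_dvd (Nat.dvd_lcm_right d t)).trans hv2)).trans hb
    have hcard := Nat.Ioc_filter_modEq_card 0 N hlcm v
    rw [← hset] at hcard
    have hL : (0 : ℚ) < (Nat.lcm d t : ℕ) := by exact_mod_cast hlcm
    have hmono : ⌊(((0 : ℕ) : ℚ) - v) / (Nat.lcm d t : ℕ)⌋ ≤ ⌊((N : ℚ) - v) / (Nat.lcm d t : ℕ)⌋ := by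
      apply Int.floor_le_floor
      gcongr
      simp
    rw [max_eq_left (by linarith)] at hcard
    set K := ((Finset.Icc 1 N).filter
      (fun n : ℕ => d ∣ n ∧ (n : ℤ) ≡ a [ZMOD (t : ℤ)])).card with hK
    have hq : |(K : ℚ) - (N : ℚ) / (Nat.lcm d t : ℕ)| ≤ 1 := by
      have e : (K : ℚ) = ((K : ℤ) : ℚ) := by simp
      rw [e, hcard]
      push_cast
      have a1 := Int.floor_le (((N : ℚ) - v) / (Nat.lcm d t : ℕ))
      have a2 := Int.lt_floor_add_one (((N : ℚ) - v) / (Nat.lcm d t : ℕ))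
      have a3 := Int.floor_le ((((0 : ℕ) : ℚ) - v) / (Nat.lcm d t : ℕ))
      have a4 := Int.lt_floor_add_one ((((0 : ℕ) : ℚ) - v) / (Nat.lcm d t : ℕ))
      have e2 : ((N : ℚ) - v) / (Nat.lcm d t : ℕ) =
        (N : ℚ) / (Nat.lcm d t : ℕ) + (((0 : ℕ) : ℚ) - v) / (Nat.lcm d t : ℕ) := by
        rw [← add_div]; congr 1; push_cast; ring
      push_cast at *
      rw [abs_le]
      constructor <;> linarith
    have hq' : |(K : ℝ) - (N : ℝ) / (Nat.lcm d t : ℕ)| ≤ 1 := by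
      have h5 : ((|(K : ℚ) - (N : ℚ) / (Nat.lcm d t : ℕ)| : ℚ) : ℝ) ≤ ((1 : ℚ) : ℝ) :=
        Rat.cast_le.2 hq
      push_cast at h5
      exact h5
    have e3 : (N : ℝ) / t * (((Nat.gcd d t : ℕ) : ℝ) / d) = (N : ℝ) / (Nat.lcm d t : ℕ) := by
      have hgl : ((Nat.gcd d t : ℕ) : ℝ) * (Nat.lcm d t : ℕ) = d * t := by
        exact_mod_cast Nat.gcd_mul_lcm d t
      have : (0 : ℝ) < (Nat.lcm d t : ℕ) := by exact_mod_cast hlcm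
      have : (0 : ℝ) < d := by exact_mod_cast hd
      have : (0 : ℝ) < t := by exact_mod_cast ht
      rw [div_mul_div_comm, div_eq_div_iff (by positivity) (by positivity), mul_assoc, hgl]
      ring
    rw [e3]
    exact hq'
  · have : (Finset.Icc 1 N).filter (fun n : ℕ => d ∣ n ∧ (n : ℤ) ≡ a [ZMOD (t : ℤ)]) = ∅ := by
      rw [Finset.filter_eq_empty_iff]
      rintro n _ ⟨h1, h2⟩
      apply h
      have h3 : ((Nat.gcd d t : ℕ) : ℤ) ∣ a - n :=
        (Int.natCast_dvd_natCast.2 (Nat.gcd_dvd_right d t)).trans h2.dvd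
      exact (dvd_iff_dvd_of_dvd_sub h3).2
        (Int.natCast_dvd_natCast.2 ((Nat.gcd_dvd_left d t).trans h1))
    rw [this]
    simp

/-- Lemma A.2: let `f` be a sieve function of range `D ≪ N`,
i.e. `f(n) = ∑_{d ∣ n, d ≤ D} f'(d)` with essentially bounded Eratosthenes
transform `f'`.  Then, uniformly in `a ∈ ℤ`,
`∑_{n ≤ N, n ≡ a (mod t)} f(n) = (N/t) ∑_{k ∣ t} f̂(k) c_k(a) + O_ε(D^{1+ε})`,
where `f̂(k) = ∑_{m ≤ D, k ∣ m} f'(m)/m`. -/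
theorem sieve_function_in_arithmetic_progressions
    (f' : ℕ → ℂ)
    (hf' : ∀ ε : ℝ, 0 < ε → ∃ c : ℝ, 0 < c ∧ ∀ q : ℕ, 1 ≤ q → ‖f' q‖ ≤ c * (q : ℝ) ^ ε)
    (ε : ℝ) (hε : 0 < ε) (A : ℝ) (hA : 0 < A) :
    ∃ C : ℝ, 0 < C ∧ ∀ (N D t : ℕ) (a : ℤ), 0 < N → 0 < D → 0 < t →
      (D : ℝ) ≤ A * N →
      ‖(∑ n ∈ Finset.Icc 1 N,
            if (n : ℤ) ≡ a [ZMOD (t : ℤ)] then ∑ d ∈ n.divisors.filter (· ≤ D), f' d else 0)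
          - ((N : ℂ) / (t : ℂ)) * ∑ k ∈ t.divisors,
              (∑ m ∈ (Finset.Icc 1 D).filter (k ∣ ·), f' m / (m : ℂ)) *
                (ramanujanSum k a : ℂ)‖
        ≤ C * (D : ℝ) ^ (1 + ε) := by
  obtain ⟨c, hc, hcb⟩ := hf' ε hε
  refine ⟨c, hc, fun N D t a _ hD ht _ => ?_⟩
  have hL : (∑ n ∈ Finset.Icc 1 N,
      if (n : ℤ) ≡ a [ZMOD (t : ℤ)] then ∑ d ∈ n.divisors.filter (· ≤ D), f' d else 0)
      = ∑ d ∈ Finset.Icc 1 D, f' d * ((((Finset.Icc 1 N).filter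
        (fun n : ℕ => d ∣ n ∧ (n : ℤ) ≡ a [ZMOD (t : ℤ)])).card : ℕ) : ℂ) := by
    have h1 : ∀ n ∈ Finset.Icc 1 N,
        (if (n : ℤ) ≡ a [ZMOD (t : ℤ)] then ∑ d ∈ n.divisors.filter (· ≤ D), f' d else 0)
        = ∑ d ∈ Finset.Icc 1 D, if d ∣ n ∧ (n : ℤ) ≡ a [ZMOD (t : ℤ)] then f' d else 0 := by
      intro n hn
      have hn1 : 1 ≤ n := (Finset.mem_Icc.1 hn).1
      have h2 : n.divisors.filter (· ≤ D) = (Finset.Icc 1 D).filter (· ∣ n) := by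
        ext d
        simp only [Finset.mem_filter, Nat.mem_divisors, Finset.mem_Icc]
        constructor
        · rintro ⟨⟨h3, _⟩, h4⟩
          exact ⟨⟨Nat.pos_of_dvd_of_pos h3 hn1, h4⟩, h3⟩
        · rintro ⟨⟨_, h4⟩, h3⟩
          exact ⟨⟨h3, by omega⟩, h4⟩
      by_cases h : (n : ℤ) ≡ a [ZMOD (t : ℤ)]
      · simp only [h, if_true, and_true]
        rw [h2, Finset.sum_filter]
      · simp [h]
    rw [Finset.sum_congr rfl h1, Finset.sum_comm]
    refine Finset.sum_congr rfl fun d _ => ?_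
    rw [← Finset.sum_filter, Finset.sum_const, nsmul_eq_mul, mul_comm]
  have hR : ((N : ℂ) / (t : ℂ)) * ∑ k ∈ t.divisors,
      (∑ m ∈ (Finset.Icc 1 D).filter (k ∣ ·), f' m / (m : ℂ)) * (ramanujanSum k a : ℂ)
      = ∑ d ∈ Finset.Icc 1 D, f' d * (((N : ℝ) / t * ((if ((Nat.gcd d t : ℕ) : ℤ) ∣ a
          then ((Nat.gcd d t : ℕ) : ℝ) else 0) / d) : ℝ) : ℂ) := by
    have h1 : ∀ k ∈ t.divisors,
        (∑ m ∈ (Finset.Icc 1 D).filter (k ∣ ·), f' m / (m : ℂ)) * (ramanujanSum k a : ℂ)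
        = ∑ m ∈ Finset.Icc 1 D,
          if k ∣ m then f' m / (m : ℂ) * (ramanujanSum k a : ℂ) else 0 := by
      intro k _
      rw [Finset.sum_mul, Finset.sum_filter]
    rw [Finset.sum_congr rfl h1, Finset.sum_comm, Finset.mul_sum]
    refine Finset.sum_congr rfl fun d hd => ?_
    have h2 : t.divisors.filter (· ∣ d) = (Nat.gcd d t).divisors := by
      ext k
      have : Nat.gcd d t ≠ 0 := (Nat.gcd_pos_of_pos_right _ ht).ne'
      have := ht.ne'
      simp only [Finset.mem_filter, Nat.mem_divisors, Nat.dvd_gcd_iff]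
      tauto
    have h3 := ram_aux_divisors a (Nat.gcd d t) (Nat.gcd_pos_of_pos_right _ ht)
    have h4 : ∑ k ∈ (Nat.gcd d t).divisors, (ramanujanSum k a : ℂ) =
        ((if ((Nat.gcd d t : ℕ) : ℤ) ∣ a then ((Nat.gcd d t : ℕ) : ℤ) else 0 : ℤ) : ℂ) := by
      rw [← h3]; push_cast; rfl
    rw [← Finset.sum_filter, h2, ← Finset.mul_sum, h4]
    split_ifs <;> push_cast <;> ring
  rw [hL, hR, ← Finset.sum_sub_distrib]
  have hDpos : (0 : ℝ) < D := by exact_mod_cast hD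
  calc _ ≤ ∑ d ∈ Finset.Icc 1 D, c * (D : ℝ) ^ ε := by
        refine norm_sum_le_of_le _ fun d hd => ?_
        obtain ⟨hd1, hd2⟩ := Finset.mem_Icc.1 hd
        rw [← mul_sub, norm_mul, ← Complex.ofReal_natCast, ← Complex.ofReal_sub,
          Complex.norm_real, Real.norm_eq_abs]
        have hc1 := ram_aux_count N d t a hd1 ht
        have hc2 : ‖f' d‖ ≤ c * (D : ℝ) ^ ε := by
          refine (hcb d hd1).trans ?_
          gcongr
        calc _ ≤ ‖f' d‖ * 1 := by gcongr
          _ ≤ _ := by rw [mul_one]; exact hc2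
    _ = c * (D : ℝ) ^ (1 + ε) := by
        rw [Finset.sum_const, Nat.card_Icc, nsmul_eq_mul, Real.rpow_add hDpos, Real.rpow_one]
        push_cast [Nat.add_sub_cancel]
        ring
end

section
/- Let ℓ, D, N be positive integers with D ≪ N and let f be a sieve function of range D. Then, uniformly in a ∈ ℤ, Σ_{n ≤ N} f(n)·c_ℓ(n − a) = 𝑓̂(ℓ)·c_ℓ(a)·N + O_ε((Dℓ)^{1+ε}) for every ε > 0. -/
open ArithmeticFunction in
lemma ramSum_eq (q : ℕ) (hq : 0 < q) (n : ℤ) :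
    ramanujanSum q n = ∑ t ∈ q.divisors, if (t : ℤ) ∣ n then (t : ℤ) * moebius (q / t) else 0 := by
  unfold ramanujanSum
  rw [← Finset.sum_filter]
  apply Finset.sum_congr _ (fun _ _ => rfl)
  ext t
  simp only [Nat.mem_divisors, Finset.mem_filter, Nat.dvd_gcd_iff, Int.natCast_dvd]
  have : Nat.gcd q n.natAbs ≠ 0 := (Nat.gcd_pos_of_pos_left _ hq).ne'
  have := hq.ne'
  tauto

open ArithmeticFunction in
/-- `t ↦ t · 1[t ∣ a]`. -/
def auxF (a : ℤ) : ArithmeticFunction ℤ := ⟨fun t => if (t : ℤ) ∣ a then (t : ℤ) else 0, by simp⟩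

lemma auxF_apply (a : ℤ) (t : ℕ) : auxF a t = if (t : ℤ) ∣ a then (t : ℤ) else 0 := rfl

open ArithmeticFunction in
lemma ramSum_eq_conv (q : ℕ) (hq : 0 < q) (a : ℤ) :
    ramanujanSum q a = (auxF a * (moebius : ArithmeticFunction ℤ)) q := by
  rw [ramSum_eq q hq, mul_apply,
    Nat.sum_divisorsAntidiagonal (fun x y => auxF a x * moebius y)]
  apply Finset.sum_congr rfl
  intro t _
  rw [auxF_apply]
  split_ifs <;> simp

open ArithmeticFunction in
lemma coeff_identity (l d : ℕ) (hl : 0 < l) (hd : 0 < d) (a : ℤ) :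
    (∑ t ∈ l.divisors, auxF a (Nat.gcd t d) * moebius (l / t)) =
      if l ∣ d then ramanujanSum l a else 0 := by
  let H : ArithmeticFunction ℤ := ⟨fun t => if t = 0 then 0 else auxF a (Nat.gcd t d), by simp⟩
  let G : ArithmeticFunction ℤ :=
    ⟨fun s => if s ∣ d then (auxF a * (moebius : ArithmeticFunction ℤ)) s else 0, by simp⟩
  have hH : H = G * (zeta : ArithmeticFunction ℤ) := by
    ext t
    rcases Nat.eq_zero_or_pos t with rfl | ht
    · simp
    rw [coe_mul_zeta_apply]
    change (if t = 0 then 0 else auxF a (Nat.gcd t d)) = ∑ s ∈ t.divisors, if s ∣ d then (auxF a * (moebius : ArithmeticFunction ℤ)) s else 0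
    rw [if_neg ht.ne', ← Finset.sum_filter]
    have h1 : t.divisors.filter (· ∣ d) = (Nat.gcd t d).divisors := by
      ext s
      simp only [Nat.mem_divisors, Finset.mem_filter, Nat.dvd_gcd_iff]
      have : Nat.gcd t d ≠ 0 := (Nat.gcd_pos_of_pos_left _ ht).ne'
      have := ht.ne'
      tauto
    rw [h1, ← coe_mul_zeta_apply, mul_assoc, moebius_mul_coe_zeta, mul_one]
  have hG : H * (moebius : ArithmeticFunction ℤ) = G := by
    rw [hH, mul_assoc, coe_zeta_mul_moebius, mul_one]
  have h2 : (H * (moebius : ArithmeticFunction ℤ)) l = G l := by rw [hG]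
  rw [mul_apply, Nat.sum_divisorsAntidiagonal (fun x y => H x * moebius y)] at h2
  rw [ramSum_eq_conv l hl]
  rw [show G l = if l ∣ d then (auxF a * (moebius : ArithmeticFunction ℤ)) l else 0 from rfl] at h2
  rw [← h2]
  apply Finset.sum_congr rfl
  intro t ht
  have : t ≠ 0 := (Nat.pos_of_mem_divisors ht).ne'
  rw [show H t = if t = 0 then 0 else auxF a (Nat.gcd t d) from rfl, if_neg this]

lemma count_bound (K t d : ℕ) (ht : 0 < t) (a : ℤ) :
    |(((Finset.Icc 1 K).filter (fun k : ℕ => (t : ℤ) ∣ (d : ℤ) * k - a)).card : ℝ) * t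
      - (K : ℝ) * (auxF a (Nat.gcd t d) : ℤ)| ≤ t := by
  have hg : 0 < Nat.gcd t d := Nat.gcd_pos_of_pos_left _ ht
  rw [auxF_apply]
  split_ifs with hga
  · obtain ⟨a', rfl⟩ := hga
    obtain ⟨g, t', d', hg', hcop, htt, hdd⟩ := Nat.exists_coprime' (m := t) (n := d) hg
    have hgg : Nat.gcd t d = g := by
      rw [htt, hdd, Nat.gcd_mul_right, hcop.gcd_eq_one, one_mul]
    rw [hgg]
    subst htt hdd
    have ht' : 0 < t' := Nat.pos_of_mul_pos_right ht
    have hcz : IsCoprime (d' : ℤ) (t' : ℤ) := by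
      rw [Nat.isCoprime_iff_coprime]; exact hcop.symm
    obtain ⟨u, w, huw⟩ := hcz
    have key : ∀ k : ℕ, (((t' * g : ℕ) : ℤ) ∣ ((d' * g : ℕ) : ℤ) * k - g * a') ↔
        (k : ℤ) ≡ u * a' [ZMOD t'] := by
      intro k
      have hgz : (g : ℤ) ≠ 0 := by exact_mod_cast hg'.ne'
      rw [show ((d' * g : ℕ) : ℤ) * k - g * a' = (d' * k - a') * g by push_cast; ring,
        Nat.cast_mul, Int.mul_dvd_mul_iff_right hgz, Int.modEq_comm, Int.modEq_iff_dvd]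
      constructor
      · rintro ⟨r, hr⟩
        refine ⟨u * r + w * k, ?_⟩
        linear_combination u * hr - k * huw
      · rintro ⟨r, hr⟩
        refine ⟨d' * r - w * a', ?_⟩
        linear_combination d' * hr + a' * huw
    have hcard : ((Finset.Icc 1 K).filter (fun k : ℕ => ((t' * g : ℕ) : ℤ) ∣ ((d' * g : ℕ) : ℤ) * k - g * a')).card
       = ((Finset.Ioc (0:ℤ) K).filter (fun k => k ≡ u * a' [ZMOD t'])).card := by
      apply Finset.card_bij (fun (k : ℕ) _ => (k : ℤ))
      · intro k hk
        simp only [Finset.mem_filter, Finset.mem_Icc, Finset.mem_Ioc, key] at hk ⊢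
        refine ⟨⟨by omega, by omega⟩, hk.2⟩
      · intro x _ y _ h
        exact_mod_cast h
      · intro k hk
        simp only [Finset.mem_filter, Finset.mem_Ioc] at hk
        refine ⟨k.toNat, ?_, by omega⟩
        simp only [Finset.mem_filter, Finset.mem_Icc, key]
        refine ⟨⟨by omega, by omega⟩, ?_⟩
        rw [Int.toNat_of_nonneg (by omega)]; exact hk.2
    rw [hcard]
    have hz := Int.Ioc_filter_modEq_card (0:ℤ) K (r := (t':ℤ)) (by exact_mod_cast ht') (u * a')
    set n := ((Finset.Ioc (0:ℤ) K).filter (fun k => k ≡ u * a' [ZMOD t'])).card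
    have hq : |(n : ℚ) - K / t'| ≤ 1 := by
      set x : ℚ := (((K:ℤ):ℚ) - ((u * a' : ℤ) : ℚ)) / ((t' : ℤ) : ℚ) with hx
      set y : ℚ := (((0:ℤ):ℚ) - ((u * a' : ℤ) : ℚ)) / ((t' : ℤ) : ℚ) with hy
      have hxy : x - y = K / t' := by rw [hx, hy]; push_cast; ring
      have h0 : (0:ℚ) ≤ K / t' := by positivity
      have hmono : ⌊y⌋ ≤ ⌊x⌋ := Int.floor_le_floor (by linarith)
      rw [max_eq_left (by linarith)] at hz
      have hz' : (n : ℚ) = ⌊x⌋ - ⌊y⌋ := by exact_mod_cast hz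
      rw [hz', ← hxy, abs_le]
      have := Int.floor_le x
      have := Int.floor_le y
      have := Int.lt_floor_add_one x
      have := Int.lt_floor_add_one y
      constructor <;> linarith
    have hr : |(n : ℝ) - K / t'| ≤ 1 := by
      have := (Rat.cast_le (K := ℝ)).mpr hq
      push_cast at this
      exact this
    have : (n : ℝ) * ((t' * g : ℕ) : ℝ) - K * ((g : ℤ) : ℝ) = ((n : ℝ) - K / t') * (t' * g) := by
      have : (t' : ℝ) ≠ 0 := by positivity
      field_simp
      push_cast
      ring
    rw [this, abs_mul]
    push_cast
    rw [abs_of_nonneg (by positivity : (0:ℝ) ≤ t' * g)]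
    nlinarith [(by positivity : (0:ℝ) ≤ t' * g)]
  · rw [Finset.card_eq_zero.mpr]
    · simp
    · rw [Finset.filter_eq_empty_iff]
      intro k _ h
      apply hga
      have h1 : ((Nat.gcd t d : ℕ) : ℤ) ∣ (t : ℤ) := by exact_mod_cast Nat.gcd_dvd_left t d
      have h2 : ((Nat.gcd t d : ℕ) : ℤ) ∣ (d : ℤ) := by exact_mod_cast Nat.gcd_dvd_right t d
      have := dvd_sub (h2.mul_right (k : ℤ)) (h1.trans h)
      simpa using this

lemma abs_moebius_real (n : ℕ) : |((ArithmeticFunction.moebius n : ℤ) : ℝ)| ≤ 1 := by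
  exact_mod_cast ArithmeticFunction.abs_moebius_le_one

lemma ram_abs (l : ℕ) (hl : 0 < l) (a : ℤ) :
    |(ramanujanSum l a : ℝ)| ≤ ∑ t ∈ l.divisors, (t : ℝ) := by
  rw [ramSum_eq l hl]
  push_cast
  refine (Finset.abs_sum_le_sum_abs _ _).trans (Finset.sum_le_sum fun t _ => ?_)
  split_ifs
  · rw [abs_mul, Nat.abs_cast]
    exact mul_le_of_le_one_right (by positivity) (abs_moebius_real _)
  · simp

lemma inner_bound (K l d : ℕ) (hl : 0 < l) (hd : 0 < d) (a : ℤ) :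
    |((∑ k ∈ Finset.Icc 1 K, ramanujanSum l ((d : ℤ) * k - a) : ℤ) : ℝ)
      - K * ((if l ∣ d then ramanujanSum l a else 0 : ℤ) : ℝ)| ≤ ∑ t ∈ l.divisors, (t : ℝ) := by
  rw [← coeff_identity l d hl hd a]
  have h1 : (∑ k ∈ Finset.Icc 1 K, ramanujanSum l ((d : ℤ) * k - a)) =
      ∑ t ∈ l.divisors, (((Finset.Icc 1 K).filter (fun k : ℕ => (t : ℤ) ∣ (d : ℤ) * k - a)).card : ℤ)
        * t * ArithmeticFunction.moebius (l / t) := by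
    simp_rw [ramSum_eq l hl]
    rw [Finset.sum_comm]
    apply Finset.sum_congr rfl
    intro t _
    rw [← Finset.sum_filter, Finset.sum_const, nsmul_eq_mul, mul_assoc]
  rw [h1]
  push_cast
  rw [Finset.mul_sum, ← Finset.sum_sub_distrib]
  refine (Finset.abs_sum_le_sum_abs _ _).trans (Finset.sum_le_sum fun t ht => ?_)
  rw [← mul_assoc, ← sub_mul, abs_mul]
  have := count_bound K t d (Nat.pos_of_mem_divisors ht) a
  exact (mul_le_of_le_one_right (abs_nonneg _) (abs_moebius_real _)).trans this

lemma inner_bound' (N l d : ℕ) (hl : 0 < l) (hd : 0 < d) (a : ℤ) :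
    |((∑ k ∈ Finset.Icc 1 (N / d), ramanujanSum l ((d : ℤ) * k - a) : ℤ) : ℝ)
      - (N / d : ℝ) * ((if l ∣ d then ramanujanSum l a else 0 : ℤ) : ℝ)|
      ≤ 2 * ∑ t ∈ l.divisors, (t : ℝ) := by
  have h1 := inner_bound (N / d) l d hl hd a
  have h0 : (0:ℝ) ≤ ∑ t ∈ l.divisors, (t : ℝ) := by positivity
  have h2 : |((if l ∣ d then ramanujanSum l a else 0 : ℤ) : ℝ)| ≤ ∑ t ∈ l.divisors, (t : ℝ) := by
    split_ifs
    · exact ram_abs l hl a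
    · simpa using h0
  set c : ℝ := ((if l ∣ d then ramanujanSum l a else 0 : ℤ) : ℝ)
  have h3 : |((N / d : ℕ) : ℝ) - (N / d : ℝ)| ≤ 1 := by
    rw [abs_le]
    have e1 : ((N / d : ℕ) : ℝ) ≤ N / d := Nat.cast_div_le
    have e2 : (N : ℝ) / d < ((N / d : ℕ) : ℝ) + 1 := by
      rw [div_lt_iff₀ (by positivity)]
      have := Nat.lt_div_mul_add (a := N) hd
      have h : N < (N / d + 1) * d := by linarith
      exact_mod_cast h
    constructor <;> linarith
  have h4 : |(((N / d : ℕ) : ℝ) - (N / d : ℝ)) * c| ≤ ∑ t ∈ l.divisors, (t : ℝ) := by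
    rw [abs_mul]
    exact (mul_le_of_le_one_left (abs_nonneg _) h3).trans h2
  calc _ = |((∑ k ∈ Finset.Icc 1 (N / d), ramanujanSum l ((d : ℤ) * k - a) : ℤ) : ℝ)
      - ((N / d : ℕ) : ℝ) * c + (((N / d : ℕ) : ℝ) - (N / d : ℝ)) * c| := by congr 1; ring
    _ ≤ _ := (abs_add_le _ _).trans (by linarith)

lemma sigma_bound (ε : ℝ) (hε : 0 < ε) (l : ℕ) (hl : 0 < l) :
    ∑ t ∈ l.divisors, (t : ℝ) ≤ (1 + 1 / ε) * (l : ℝ) ^ (1 + ε) := by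
  have hl0 : (0:ℝ) < l := by positivity
  have hl1 : (1:ℝ) ≤ l := by exact_mod_cast hl
  have h1 : ∑ t ∈ l.divisors, (t : ℝ) = ∑ t ∈ l.divisors, (l : ℝ) * (t : ℝ)⁻¹ := by
    rw [← Nat.sum_div_divisors l (fun t => (t : ℝ))]
    apply Finset.sum_congr rfl
    intro t ht
    rw [Nat.cast_div (Nat.dvd_of_mem_divisors ht) (by exact_mod_cast (Nat.pos_of_mem_divisors ht).ne'), div_eq_mul_inv]
  have h2 : ∑ t ∈ l.divisors, (t : ℝ)⁻¹ ≤ ∑ t ∈ Finset.Icc 1 l, (t : ℝ)⁻¹ := by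
    apply Finset.sum_le_sum_of_subset_of_nonneg
    · intro t ht
      exact Finset.mem_Icc.mpr ⟨Nat.pos_of_mem_divisors ht, Nat.divisor_le ht⟩
    · intros; positivity
  have h3 : ∑ t ∈ Finset.Icc 1 l, (t : ℝ)⁻¹ ≤ 1 + Real.log l := by
    have := harmonic_le_one_add_log l
    rw [harmonic_eq_sum_Icc] at this
    push_cast at this
    exact this
  have h4 := Real.log_le_rpow_div hl0.le hε
  have h5 := Real.one_le_rpow hl1 hε.le
  rw [h1, ← Finset.mul_sum, Real.rpow_add hl0, Real.rpow_one]
  calc _ ≤ (l : ℝ) * ((l:ℝ) ^ ε + (l:ℝ) ^ ε / ε) := by gcongr; linarith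
    _ = _ := by ring

/-- Lemma A.3: let `f` be a sieve function of range `D ≪ N`,
i.e. `f(n) = ∑_{d ∣ n, d ≤ D} f'(d)` with essentially bounded Eratosthenes
transform `f'`.  Then, uniformly in `a ∈ ℤ`,
`∑_{n ≤ N} f(n) c_ℓ(n − a) = f̂(ℓ) c_ℓ(a) N + O_ε((Dℓ)^{1+ε})`,
where `f̂(ℓ) = ∑_{m ≤ D, ℓ ∣ m} f'(m)/m`. -/
theorem sieve_function_against_ramanujan_sum
    (f' : ℕ → ℂ)
    (hf' : ∀ ε : ℝ, 0 < ε → ∃ c : ℝ, 0 < c ∧ ∀ q : ℕ, 1 ≤ q → ‖f' q‖ ≤ c * (q : ℝ) ^ ε)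
    (ε : ℝ) (hε : 0 < ε) (A : ℝ) (hA : 0 < A) :
    ∃ C : ℝ, 0 < C ∧ ∀ (N D ℓ : ℕ) (a : ℤ), 0 < N → 0 < D → 0 < ℓ →
      (D : ℝ) ≤ A * N →
      ‖(∑ n ∈ Finset.Icc 1 N,
            (∑ d ∈ n.divisors.filter (· ≤ D), f' d) * (ramanujanSum ℓ ((n : ℤ) - a) : ℂ))
          - (∑ m ∈ (Finset.Icc 1 D).filter (ℓ ∣ ·), f' m / (m : ℂ)) *
              (ramanujanSum ℓ a : ℂ) * (N : ℂ)‖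
        ≤ C * ((D : ℝ) * (ℓ : ℝ)) ^ (1 + ε) := by
  obtain ⟨c, hc, hf⟩ := hf' ε hε
  refine ⟨c * (2 * (1 + 1 / ε)), by positivity, ?_⟩
  intro N D ℓ a hN hD hl _
  have hswap : (∑ n ∈ Finset.Icc 1 N,
        (∑ d ∈ n.divisors.filter (· ≤ D), f' d) * (ramanujanSum ℓ ((n : ℤ) - a) : ℂ)) =
      ∑ d ∈ Finset.Icc 1 D, f' d *
        ((∑ k ∈ Finset.Icc 1 (N / d), ramanujanSum ℓ ((d : ℤ) * k - a) : ℤ) : ℂ) := by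
    have e1 : ∀ n ∈ Finset.Icc 1 N,
        (∑ d ∈ n.divisors.filter (· ≤ D), f' d) * (ramanujanSum ℓ ((n : ℤ) - a) : ℂ) =
        ∑ d ∈ Finset.Icc 1 D, if d ∣ n then f' d * (ramanujanSum ℓ ((n : ℤ) - a) : ℂ) else 0 := by
      intro n hn
      rw [Finset.sum_mul, ← Finset.sum_filter]
      apply Finset.sum_congr _ (fun _ _ => rfl)
      ext d
      simp only [Finset.mem_filter, Nat.mem_divisors, Finset.mem_Icc] at hn ⊢
      constructor
      · rintro ⟨⟨h1, h2⟩, h3⟩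
        exact ⟨⟨Nat.pos_of_dvd_of_pos h1 (by omega), h3⟩, h1⟩
      · rintro ⟨⟨h1, h2⟩, h3⟩
        exact ⟨⟨h3, by omega⟩, h2⟩
    rw [Finset.sum_congr rfl e1, Finset.sum_comm]
    apply Finset.sum_congr rfl
    intro d hd
    have hd0 : 0 < d := (Finset.mem_Icc.mp hd).1
    rw [← Finset.sum_filter, ← Finset.mul_sum]
    push_cast
    congr 1
    symm
    apply Finset.sum_bij (fun k _ => d * k)
    · intro k hk
      simp only [Finset.mem_filter, Finset.mem_Icc] at hk ⊢
      refine ⟨⟨Nat.mul_pos hd0 hk.1, ?_⟩, dvd_mul_right _ _⟩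
      have := (Nat.le_div_iff_mul_le hd0).mp hk.2
      linarith
    · intro x _ y _ h
      exact Nat.eq_of_mul_eq_mul_left hd0 h
    · rintro n hn
      simp only [Finset.mem_filter, Finset.mem_Icc] at hn
      obtain ⟨⟨h1, h2⟩, k, rfl⟩ := hn
      refine ⟨k, ?_, rfl⟩
      rw [Finset.mem_Icc]
      refine ⟨Nat.pos_of_mul_pos_left h1, ?_⟩
      rw [Nat.le_div_iff_mul_le hd0]
      linarith
    · intro k _
      push_cast
      rfl
  have hmain : (∑ m ∈ (Finset.Icc 1 D).filter (ℓ ∣ ·), f' m / (m : ℂ)) *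
              (ramanujanSum ℓ a : ℂ) * (N : ℂ) =
      ∑ d ∈ Finset.Icc 1 D, f' d *
        ((N / d : ℂ) * ((if ℓ ∣ d then ramanujanSum ℓ a else 0 : ℤ) : ℂ)) := by
    rw [Finset.sum_filter, Finset.sum_mul, Finset.sum_mul]
    apply Finset.sum_congr rfl
    intro d _
    split_ifs
    · ring
    · simp
  rw [hswap, hmain, ← Finset.sum_sub_distrib]
  have hD0 : (0:ℝ) < D := by positivity
  have hl0 : (0:ℝ) < ℓ := by positivity
  have hterm : ∀ d ∈ Finset.Icc 1 D, ‖f' d *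
        ((∑ k ∈ Finset.Icc 1 (N / d), ramanujanSum ℓ ((d : ℤ) * k - a) : ℤ) : ℂ) - f' d *
        ((N / d : ℂ) * ((if ℓ ∣ d then ramanujanSum ℓ a else 0 : ℤ) : ℂ))‖ ≤
      (c * (D : ℝ) ^ ε) * (2 * ((1 + 1 / ε) * (ℓ : ℝ) ^ (1 + ε))) := by
    intro d hd
    rw [Finset.mem_Icc] at hd
    rw [← mul_sub, norm_mul]
    apply mul_le_mul _ _ (norm_nonneg _) (by positivity)
    · refine (hf d hd.1).trans ?_
      gcongr
      exact hd.2
    · have h1 := inner_bound' N ℓ d hl hd.1 a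
      have h2 := sigma_bound ε hε ℓ hl
      generalize (if ℓ ∣ d then ramanujanSum ℓ a else 0) = z at h1 ⊢
      rw [← Real.norm_eq_abs, ← Complex.norm_real] at h1
      push_cast at h1 ⊢
      linarith
  refine (norm_sum_le _ _).trans ((Finset.sum_le_sum hterm).trans (le_of_eq ?_))
  rw [Finset.sum_const, Nat.card_Icc, nsmul_eq_mul, Real.mul_rpow hD0.le hl0.le,
    Real.rpow_add hD0, Real.rpow_one]
  simp only [Nat.add_sub_cancel]
  ring
end

section
/- Carmichael's formula: let F : ℕ → ℂ admit a uniformly convergent Ramanujan expansion F(h) = Σ_{q=1}^∞ 𝐹̂(q)·c_q(h) for all h ∈ ℕ, with coefficients 𝐹̂(q) ∈ ℂ independent of h (a pure expansion, where the only h-dependence is through c_q(h)). Then for every ℓ ≥ 1 the coefficients are recovered as 𝐹̂(ℓ) = (1/φ(ℓ))·lim_{x→∞} (1/x)·Σ_{h ≤ x} F(h)·c_ℓ(h); in particular this limit exists. -/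
/-- The divisors of `q` that are multiples of `k`, weighted by `μ(q/d)`. -/
lemma mu_sum (q k : ℕ) (hq : 1 ≤ q) :
    ∑ d ∈ q.divisors, (if k ∣ d then ArithmeticFunction.moebius (q / d) else 0)
      = if k = q then (1 : ℤ) else 0 := by
  by_cases hk : k ∣ q
  · obtain ⟨m, rfl⟩ := hk
    have hk0 : 0 < k := Nat.pos_of_ne_zero (by rintro rfl; simp at hq)
    have hm0 : 0 < m := Nat.pos_of_ne_zero (by rintro rfl; simp at hq)
    have h1 : ∑ d ∈ (k * m).divisors,
        (if k ∣ d then ArithmeticFunction.moebius (k * m / d) else 0)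
        = ∑ d ∈ m.divisors, ArithmeticFunction.moebius (m / d) := by
      rw [← Finset.sum_filter]
      symm
      apply Finset.sum_bij (fun d _ => k * d)
      · intro d hd
        simp only [Finset.mem_filter, Nat.mem_divisors] at hd ⊢
        exact ⟨⟨Nat.mul_dvd_mul_left k hd.1, by positivity⟩, Dvd.intro _ rfl⟩
      · intro a _ b _ hab
        exact Nat.eq_of_mul_eq_mul_left hk0 hab
      · intro b hb
        simp only [Finset.mem_filter, Nat.mem_divisors] at hb
        obtain ⟨⟨hb1, _⟩, c, rfl⟩ := hb
        exact ⟨c, by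
          simp only [Nat.mem_divisors]
          exact ⟨Nat.dvd_of_mul_dvd_mul_left hk0 hb1, by omega⟩, rfl⟩
      · intro d _
        rw [Nat.mul_div_mul_left _ _ hk0]
    rw [h1, Nat.sum_div_divisors m (fun d => ArithmeticFunction.moebius d)]
    rw [← ArithmeticFunction.coe_mul_zeta_apply, ArithmeticFunction.moebius_mul_coe_zeta,
      ArithmeticFunction.one_apply]
    have : (m = 1) ↔ (k = k * m) := by
      constructor
      · rintro rfl; simp
      · intro h
        exact Nat.eq_of_mul_eq_mul_left hk0 (by omega)
    simp only [this]
  · rw [if_neg (by rintro rfl; exact hk dvd_rfl)]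
    apply Finset.sum_eq_zero
    intro d hd
    rw [if_neg]
    intro h
    exact hk (h.trans (Nat.dvd_of_mem_divisors hd))

lemma gcd_sum (d e l : ℕ) (he : e ∈ l.divisors) :
    (Nat.gcd d e : ℤ) = ∑ k ∈ l.divisors, (Nat.totient k : ℤ) *
      ((if k ∣ d then 1 else 0) * (if k ∣ e then 1 else 0)) := by
  rw [Nat.mem_divisors] at he
  have he0 : e ≠ 0 := by rintro rfl; simp at he
  rw [← Nat.sum_totient (Nat.gcd d e)]
  have : (Nat.gcd d e).divisors = l.divisors.filter (fun k => k ∣ d ∧ k ∣ e) := by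
    ext k
    simp only [Nat.mem_divisors, Finset.mem_filter, Nat.dvd_gcd_iff, ne_eq, Nat.gcd_eq_zero_iff]
    constructor
    · rintro ⟨h, _⟩
      exact ⟨⟨h.2.trans he.1, he.2⟩, h⟩
    · rintro ⟨_, h⟩
      exact ⟨h, fun h => he0 h.2⟩
  rw [this, Finset.sum_filter]
  push_cast
  apply Finset.sum_congr rfl
  intro k _
  by_cases h1 : k ∣ d <;> by_cases h2 : k ∣ e <;> simp [h1, h2]

lemma double_sum (q l : ℕ) (hq : 1 ≤ q) (hl : 1 ≤ l) :
    ∑ d ∈ q.divisors, ∑ e ∈ l.divisors,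
      ArithmeticFunction.moebius (q / d) * ArithmeticFunction.moebius (l / e) * (Nat.gcd d e : ℤ)
      = if q = l then (Nat.totient l : ℤ) else 0 := by
  have h1 : ∑ d ∈ q.divisors, ∑ e ∈ l.divisors,
      ArithmeticFunction.moebius (q / d) * ArithmeticFunction.moebius (l / e) * (Nat.gcd d e : ℤ)
      = ∑ k ∈ l.divisors, (Nat.totient k : ℤ) *
        ((∑ d ∈ q.divisors, (if k ∣ d then ArithmeticFunction.moebius (q / d) else 0)) *
         (∑ e ∈ l.divisors, (if k ∣ e then ArithmeticFunction.moebius (l / e) else 0))) := by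
    simp only [Finset.sum_mul_sum]
    simp only [Finset.mul_sum]
    rw [Finset.sum_comm (s := l.divisors)]
    apply Finset.sum_congr rfl
    intro d _
    rw [Finset.sum_comm (s := l.divisors)]
    apply Finset.sum_congr rfl
    intro e he
    rw [gcd_sum d e l he, Finset.mul_sum]
    apply Finset.sum_congr rfl
    intro k _
    split_ifs <;> ring
  rw [h1]
  simp only [mu_sum q _ hq, mu_sum l _ hl]
  rw [Finset.sum_eq_single l]
  · by_cases h : q = l
    · simp [h]
    · simp [h, Ne.symm h]
  · intro b _ hb
    simp [hb]
  · intro h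
    exact absurd (Nat.mem_divisors.2 ⟨dvd_rfl, by omega⟩) h

lemma ram_eq (q h : ℕ) (hq : 1 ≤ q) :
    ramanujanSum q (h : ℤ) = ∑ d ∈ q.divisors,
      (if d ∣ h then (d : ℤ) * ArithmeticFunction.moebius (q / d) else 0) := by
  unfold ramanujanSum
  rw [← Finset.sum_filter]
  apply Finset.sum_congr _ (fun _ _ => rfl)
  ext d
  simp only [Nat.mem_divisors, Finset.mem_filter, Nat.dvd_gcd_iff, ne_eq, Nat.gcd_eq_zero_iff,
    Int.natAbs_natCast]
  constructor
  · rintro ⟨h, _⟩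
    exact ⟨⟨h.1, by omega⟩, h.2⟩
  · rintro ⟨⟨h1, _⟩, h2⟩
    exact ⟨⟨h1, h2⟩, by omega⟩

lemma mean_dvd (m : ℕ) :
    Filter.Tendsto (fun x : ℕ => (1 / (x : ℂ)) * ∑ h ∈ Finset.Icc 1 x, (if m ∣ h then (1 : ℂ) else 0))
      Filter.atTop (nhds (1 / (m : ℂ))) := by
  have h0 := (tendsto_nat_floor_mul_div_atTop (R := ℝ) (a := 1 / (m : ℝ)) (by positivity)).comp
    (tendsto_natCast_atTop_atTop (R := ℝ))
  have h1 := (Complex.continuous_ofReal.tendsto _).comp h0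
  have : ((1 / (m : ℝ) : ℝ) : ℂ) = 1 / (m : ℂ) := by push_cast; rfl
  rw [this] at h1
  refine h1.congr ?_
  intro x
  have hf : ⌊1 / (m : ℝ) * (x : ℝ)⌋₊ = x / m := by
    rw [one_div_mul_eq_div, Nat.floor_div_eq_div]
  have hc : ∑ h ∈ Finset.Icc 1 x, (if m ∣ h then (1 : ℂ) else 0) = ((x / m : ℕ) : ℂ) := by
    rw [Finset.sum_boole, ← Nat.Ioc_filter_dvd_card_eq_div]
    rfl
  rw [hc]
  simp only [Function.comp, hf]
  push_cast
  ring

lemma mean_ram (q l : ℕ) (hq : 1 ≤ q) (hl : 1 ≤ l) :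
    Filter.Tendsto (fun x : ℕ => (1 / (x : ℂ)) * ∑ h ∈ Finset.Icc 1 x,
      (ramanujanSum q (h : ℤ) : ℂ) * (ramanujanSum l (h : ℤ) : ℂ))
      Filter.atTop (nhds (if q = l then (Nat.totient l : ℂ) else 0)) := by
  have key : Filter.Tendsto (fun x : ℕ => ∑ d ∈ q.divisors, ∑ e ∈ l.divisors,
      ((d : ℂ) * (ArithmeticFunction.moebius (q / d) : ℂ)) *
      ((e : ℂ) * (ArithmeticFunction.moebius (l / e) : ℂ)) *
      ((1 / (x : ℂ)) * ∑ h ∈ Finset.Icc 1 x, (if Nat.lcm d e ∣ h then (1 : ℂ) else 0)))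
      Filter.atTop (nhds (∑ d ∈ q.divisors, ∑ e ∈ l.divisors,
      ((d : ℂ) * (ArithmeticFunction.moebius (q / d) : ℂ)) *
      ((e : ℂ) * (ArithmeticFunction.moebius (l / e) : ℂ)) * (1 / (Nat.lcm d e : ℂ)))) := by
    refine tendsto_finsetSum _ fun d _ => tendsto_finsetSum _ fun e _ => ?_
    exact (mean_dvd _).const_mul _
  have hval : (∑ d ∈ q.divisors, ∑ e ∈ l.divisors,
      ((d : ℂ) * (ArithmeticFunction.moebius (q / d) : ℂ)) *
      ((e : ℂ) * (ArithmeticFunction.moebius (l / e) : ℂ)) * (1 / (Nat.lcm d e : ℂ)))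
      = if q = l then (Nat.totient l : ℂ) else 0 := by
    have h := congrArg (fun z : ℤ => (z : ℂ)) (double_sum q l hq hl)

    push_cast at h
    rw [← h]
    apply Finset.sum_congr rfl
    intro d hd
    apply Finset.sum_congr rfl
    intro e he
    have hd0 : d ≠ 0 := (Nat.pos_of_mem_divisors hd).ne'
    have he0 : e ≠ 0 := (Nat.pos_of_mem_divisors he).ne'
    have hl0 : (Nat.lcm d e : ℂ) ≠ 0 := by exact_mod_cast Nat.lcm_ne_zero hd0 he0
    have hg : (Nat.gcd d e : ℂ) * (Nat.lcm d e : ℂ) = d * e := by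
      exact_mod_cast Nat.gcd_mul_lcm d e
    field_simp
    linear_combination (-(ArithmeticFunction.moebius (q / d) : ℂ) *
      (ArithmeticFunction.moebius (l / e) : ℂ)) * hg
  rw [hval] at key
  refine key.congr ?_
  intro x
  have : ∀ h : ℕ, (ramanujanSum q (h : ℤ) : ℂ) * (ramanujanSum l (h : ℤ) : ℂ)
      = ∑ d ∈ q.divisors, ∑ e ∈ l.divisors,
      ((d : ℂ) * (ArithmeticFunction.moebius (q / d) : ℂ)) *
      ((e : ℂ) * (ArithmeticFunction.moebius (l / e) : ℂ)) *
       (if Nat.lcm d e ∣ h then (1 : ℂ) else 0) := by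
    intro h
    rw [ram_eq q h hq, ram_eq l h hl]
    push_cast
    rw [Finset.sum_mul_sum]
    apply Finset.sum_congr rfl
    intro d _
    apply Finset.sum_congr rfl
    intro e _
    simp only [Nat.lcm_dvd_iff]
    by_cases h1 : d ∣ h <;> by_cases h2 : e ∣ h <;> simp [h1, h2]
  simp only [this]
  rw [Finset.sum_comm (s := Finset.Icc 1 x), Finset.mul_sum]
  apply Finset.sum_congr rfl
  intro d _
  rw [Finset.sum_comm (s := Finset.Icc 1 x), Finset.mul_sum]
  apply Finset.sum_congr rfl
  intro e _
  rw [← Finset.mul_sum]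
  ring

lemma ram_bdd (l : ℕ) (hl : 1 ≤ l) :
    ∃ C : ℝ, 0 < C ∧ ∀ h : ℕ, ‖(ramanujanSum l (h : ℤ) : ℂ)‖ ≤ C := by
  refine ⟨1 + ∑ d ∈ l.divisors, ‖(d : ℂ) * (ArithmeticFunction.moebius (l / d) : ℂ)‖,
    by positivity, ?_⟩
  intro h
  rw [ram_eq l h hl]
  push_cast
  refine (norm_sum_le _ _).trans ((Finset.sum_le_sum ?_).trans (le_add_of_nonneg_left zero_le_one))
  intro d _
  split_ifs
  · exact le_rfl
  · simp only [norm_zero]; positivity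

/-- Carmichael's formula, Lemma A.4: if `F : ℕ → ℂ` admits a
uniformly convergent pure Ramanujan expansion
`F(h) = ∑_{q=1}^∞ F̂(q) c_q(h)` (for all `h ≥ 1`), with coefficients `F̂(q)`
independent of `h`, then for every `ℓ ≥ 1` the limit
`lim_{x→∞} (1/x) ∑_{h ≤ x} F(h) c_ℓ(h)` exists and equals `φ(ℓ) F̂(ℓ)`,
i.e. `F̂(ℓ) = (1/φ(ℓ)) lim_{x→∞} (1/x) ∑_{h ≤ x} F(h) c_ℓ(h)`. -/
theorem carmichael_formula
    (F : ℕ → ℂ) (Fhat : ℕ → ℂ)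
    (hconv : TendstoUniformlyOn
      (fun (Q : ℕ) (h : ℕ) => ∑ q ∈ Finset.Icc 1 Q, Fhat q * (ramanujanSum q (h : ℤ) : ℂ))
      F Filter.atTop (Set.Ici 1))
    (ℓ : ℕ) (hℓ : 1 ≤ ℓ) :
    Filter.Tendsto
      (fun x : ℕ => (1 / (x : ℂ)) * ∑ h ∈ Finset.Icc 1 x, F h * (ramanujanSum ℓ (h : ℤ) : ℂ))
      Filter.atTop (nhds ((Nat.totient ℓ : ℂ) * Fhat ℓ)) := by
  obtain ⟨C, hC, hCb⟩ := ram_bdd ℓ hℓ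
  rw [Metric.tendsto_atTop]
  intro ε hε
  rw [Metric.tendstoUniformlyOn_iff] at hconv
  obtain ⟨Q, hQ, hQl⟩ := ((hconv (ε / (2 * C)) (by positivity)).and
    (Filter.eventually_ge_atTop ℓ)).exists
  set S : ℕ → ℂ := fun h => ∑ q ∈ Finset.Icc 1 Q, Fhat q * (ramanujanSum q (h : ℤ) : ℂ) with hS
  have hlim : Filter.Tendsto
      (fun x : ℕ => (1 / (x : ℂ)) * ∑ h ∈ Finset.Icc 1 x, S h * (ramanujanSum ℓ (h : ℤ) : ℂ))
      Filter.atTop (nhds ((Nat.totient ℓ : ℂ) * Fhat ℓ)) := by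
    have h1 : Filter.Tendsto (fun x : ℕ => ∑ q ∈ Finset.Icc 1 Q, Fhat q *
        ((1 / (x : ℂ)) * ∑ h ∈ Finset.Icc 1 x,
      (ramanujanSum q (h : ℤ) : ℂ) * (ramanujanSum ℓ (h : ℤ) : ℂ))) Filter.atTop
      (nhds (∑ q ∈ Finset.Icc 1 Q, Fhat q * (if q = ℓ then (Nat.totient ℓ : ℂ) else 0))) := by
      refine tendsto_finsetSum _ fun q hq => ?_
      exact (mean_ram q ℓ (Finset.mem_Icc.1 hq).1 hℓ).const_mul _
    have h2 : (∑ q ∈ Finset.Icc 1 Q, Fhat q * (if q = ℓ then (Nat.totient ℓ : ℂ) else 0))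
        = (Nat.totient ℓ : ℂ) * Fhat ℓ := by
      simp only [mul_ite, mul_zero, Finset.sum_ite_eq']
      rw [if_pos (Finset.mem_Icc.2 ⟨hℓ, hQl⟩), mul_comm]
    rw [h2] at h1
    refine h1.congr ?_
    intro x
    simp only [hS, Finset.sum_mul]
    rw [Finset.sum_comm, Finset.mul_sum]
    apply Finset.sum_congr rfl
    intro q _
    simp only [mul_assoc]
    rw [← Finset.mul_sum]
    ring
  obtain ⟨N, hN⟩ := (Metric.tendsto_atTop.1 hlim) (ε / 2) (by positivity)
  refine ⟨max N 1, fun x hx => ?_⟩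
  have hx1 : 1 ≤ x := (le_max_right _ _).trans hx
  have hxpos : (0 : ℝ) < x := by exact_mod_cast hx1
  have hNx := hN x ((le_max_left _ _).trans hx)
  have hdiff : dist ((1 / (x : ℂ)) * ∑ h ∈ Finset.Icc 1 x, F h * (ramanujanSum ℓ (h : ℤ) : ℂ))
      ((1 / (x : ℂ)) * ∑ h ∈ Finset.Icc 1 x, S h * (ramanujanSum ℓ (h : ℤ) : ℂ)) ≤ ε / 2 := by
    rw [dist_eq_norm, ← mul_sub, ← Finset.sum_sub_distrib, norm_mul]
    have hb : ‖∑ h ∈ Finset.Icc 1 x, (F h * (ramanujanSum ℓ (h : ℤ) : ℂ) -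
        S h * (ramanujanSum ℓ (h : ℤ) : ℂ))‖ ≤ ∑ h ∈ Finset.Icc 1 x, (ε / 2) := by
      apply norm_sum_le_of_le
      intro h hh
      rw [← sub_mul, norm_mul]
      have h3 := (hQ h (Finset.mem_Icc.1 hh).1).le
      rw [dist_eq_norm] at h3
      calc _ ≤ ε / (2 * C) * C := mul_le_mul h3 (hCb h) (norm_nonneg _) (by positivity)
        _ = ε / 2 := by field_simp
    rw [Finset.sum_const, Nat.card_Icc, nsmul_eq_mul, Nat.add_sub_cancel] at hb
    have hn : ‖(1 / (x : ℂ))‖ = 1 / (x : ℝ) := by simp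
    rw [hn]
    calc _ ≤ 1 / (x : ℝ) * (x * (ε / 2)) := by gcongr
      _ = ε / 2 := by field_simp
  calc _ ≤ _ := dist_triangle _ _ _
    _ < ε / 2 + ε / 2 := add_lt_add_of_le_of_lt hdiff hNx
    _ = ε := by ring
end

section
/- Orthogonality relation for Ramanujan sums: for all positive integers q, ℓ and every integer n, lim_{x→∞} (1/x)·Σ_{h ≤ x} c_q(n+h)·c_ℓ(h) equals c_ℓ(n) if q = ℓ and equals 0 if q ≠ ℓ. -/
lemma rs_pow_sum (q : ℕ) (hq : 0 < q) (n : ℤ) :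
    ∑ z ∈ Polynomial.nthRootsFinset q (1 : ℂ), z ^ n = if (q : ℤ) ∣ n then (q : ℂ) else 0 := by
  have hw := Complex.isPrimitiveRoot_exp q hq.ne'
  set w := Complex.exp (2 * Real.pi * Complex.I / q) with hwdef
  have hw0 : w ≠ 0 := Complex.exp_ne_zero _
  split_ifs with h
  · obtain ⟨k, rfl⟩ := h
    rw [Finset.sum_congr rfl (g := fun _ => (1 : ℂ))]
    · simp [hw.card_nthRootsFinset]
    · intro z hz
      rw [Polynomial.mem_nthRootsFinset hq] at hz
      rw [zpow_mul, zpow_natCast, hz, one_zpow]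
  · have hne : w ^ n ≠ 1 := fun h1 => h ((hw.zpow_eq_one_iff_dvd n).1 h1)
    have key : ∑ z ∈ Polynomial.nthRootsFinset q (1 : ℂ), z ^ n
        = w ^ n * ∑ z ∈ Polynomial.nthRootsFinset q (1 : ℂ), z ^ n := by
      rw [Finset.mul_sum]
      symm
      refine Finset.sum_bij' (fun z _ => w * z) (fun z _ => w⁻¹ * z) ?_ ?_ ?_ ?_ ?_
      · intro z hz
        rw [Polynomial.mem_nthRootsFinset hq] at hz ⊢
        rw [mul_pow, hz, hw.pow_eq_one, one_mul]
      · intro z hz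
        rw [Polynomial.mem_nthRootsFinset hq] at hz ⊢
        rw [mul_pow, hz, inv_pow, hw.pow_eq_one, inv_one, one_mul]
      · intro z _; field_simp
      · intro z _; field_simp
      · intro z _; rw [mul_zpow]
    have : (w ^ n - 1) * ∑ z ∈ Polynomial.nthRootsFinset q (1 : ℂ), z ^ n = 0 := by
      linear_combination -key
    exact (mul_eq_zero.1 this).resolve_left (sub_ne_zero.2 hne)

lemma rs_eq_prim (q : ℕ) (hq : 0 < q) (n : ℤ) :
    (ramanujanSum q n : ℂ) = ∑ z ∈ primitiveRoots q ℂ, z ^ n := by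
  have h1 : ∀ m : ℕ, m > 0 → ∑ d ∈ m.divisors, (∑ z ∈ primitiveRoots d ℂ, z ^ n)
      = if (m : ℤ) ∣ n then (m : ℂ) else 0 := by
    intro m hm
    rw [← rs_pow_sum m hm n]
    have hw := Complex.isPrimitiveRoot_exp m hm.ne'
    have : NeZero m := ⟨hm.ne'⟩
    rw [IsPrimitiveRoot.nthRoots_one_eq_biUnion_primitiveRoots, Finset.sum_biUnion]
    intro a _ b _ hab
    exact IsPrimitiveRoot.disjoint hab
  rw [ArithmeticFunction.sum_eq_iff_sum_mul_moebius_eq] at h1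
  rw [← h1 q hq, Nat.sum_divisorsAntidiagonal' (f := fun a b => ((ArithmeticFunction.moebius a : ℤ) : ℂ) * if (b : ℤ) ∣ n then (b : ℂ) else 0)]
  have hs : (Nat.gcd q n.natAbs).divisors = q.divisors.filter (fun d : ℕ => (d : ℤ) ∣ n) := by
    ext d
    simp [Nat.dvd_gcd_iff, hq.ne', Int.natCast_dvd]
  rw [ramanujanSum, hs, Finset.sum_filter]
  push_cast
  refine Finset.sum_congr rfl fun d _ => ?_
  split_ifs <;> simp [mul_comm]

lemma rs_mean (z : ℂ) (hz : ‖z‖ = 1) :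
    Filter.Tendsto (fun x : ℕ => (1 / (x : ℂ)) * ∑ h ∈ Finset.Icc 1 x, z ^ h) Filter.atTop
      (nhds (if z = 1 then 1 else 0)) := by
  split_ifs with h
  · subst h
    refine tendsto_const_nhds.congr' ?_
    filter_upwards [Filter.eventually_gt_atTop 0] with x hx
    have : (x : ℂ) ≠ 0 := by exact_mod_cast hx.ne'
    simp [this]
  · have hb : ∀ x : ℕ, ‖∑ h ∈ Finset.Icc 1 x, z ^ h‖ ≤ 2 / ‖z - 1‖ := by
      intro x
      have h1 : z - 1 ≠ 0 := sub_ne_zero.2 h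
      have : (∑ h ∈ Finset.Icc 1 x, z ^ h) = (z ^ (x+1) - z) / (z - 1) := by
        rw [eq_div_iff h1]
        induction x with
        | zero => simp
        | succ k ih => rw [Finset.sum_Icc_succ_top (by omega), add_mul, ih]; ring
      rw [this, norm_div]
      gcongr
      refine (norm_sub_le _ _).trans ?_
      rw [norm_pow, hz]; norm_num
    refine squeeze_zero_norm (a := fun x : ℕ => (2 / ‖z - 1‖) / (x : ℝ)) ?_
      (tendsto_const_div_atTop_nhds_zero_nat _)
    intro x
    rw [norm_mul, norm_div, norm_one, Complex.norm_natCast, one_div, inv_mul_eq_div]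
    gcongr
    exact hb x

/-- orthogonality relation for Ramanujan sums: for all positive
integers `q`, `ℓ` and every integer `n`,
`lim_{x→∞} (1/x) ∑_{h ≤ x} c_q(n+h) c_ℓ(h)` equals `c_ℓ(n)` if `q = ℓ` and
equals `0` if `q ≠ ℓ`. -/
theorem ramanujanSum_orthogonality (q ℓ : ℕ) (hq : 0 < q) (hℓ : 0 < ℓ) (n : ℤ) :
    Filter.Tendsto
      (fun x : ℕ => (1 / (x : ℝ)) *
        ∑ h ∈ Finset.Icc 1 x, (ramanujanSum q (n + (h : ℤ)) : ℝ) * (ramanujanSum ℓ (h : ℤ) : ℝ))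
      Filter.atTop
      (nhds (if q = ℓ then (ramanujanSum ℓ n : ℝ) else 0)) := by
  have hC : Filter.Tendsto
      (fun x : ℕ => ∑ z ∈ primitiveRoots q ℂ, ∑ w ∈ primitiveRoots ℓ ℂ,
        z ^ n * ((1 / (x : ℂ)) * ∑ h ∈ Finset.Icc 1 x, (z * w) ^ h)) Filter.atTop
      (nhds (∑ z ∈ primitiveRoots q ℂ, ∑ w ∈ primitiveRoots ℓ ℂ,
        z ^ n * (if z * w = 1 then 1 else 0))) := by
    refine tendsto_finsetSum _ fun z hz => tendsto_finsetSum _ fun w hw => ?_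
    refine (rs_mean (z * w) ?_).const_mul _
    rw [norm_mul, ((mem_primitiveRoots hq).1 hz).norm'_eq_one hq.ne',
      ((mem_primitiveRoots hℓ).1 hw).norm'_eq_one hℓ.ne', one_mul]
  have hlim : (∑ z ∈ primitiveRoots q ℂ, ∑ w ∈ primitiveRoots ℓ ℂ,
        z ^ n * (if z * w = 1 then (1 : ℂ) else 0))
      = ((if q = ℓ then (ramanujanSum ℓ n : ℝ) else 0 : ℝ) : ℂ) := by
    split_ifs with h
    · subst h
      push_cast
      rw [rs_eq_prim q hq n]
      refine Finset.sum_congr rfl fun z hz => ?_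
      have hz' := (mem_primitiveRoots hq).1 hz
      have hz0 : z ≠ 0 := hz'.ne_zero hq.ne'
      rw [Finset.sum_eq_single z⁻¹]
      · simp [hz0]
      · intro w _ hw
        rw [if_neg, mul_zero]
        exact fun h => hw (eq_inv_of_mul_eq_one_right h)
      · intro h
        exact absurd ((mem_primitiveRoots hq).2 hz'.inv) h
    · rw [Complex.ofReal_zero]
      refine Finset.sum_eq_zero fun z hz => Finset.sum_eq_zero fun w hw => ?_
      rw [if_neg, mul_zero]
      intro h1
      have hz' := (mem_primitiveRoots hq).1 hz
      have hw' := (mem_primitiveRoots hℓ).1 hw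
      rw [eq_inv_of_mul_eq_one_right h1] at hw'
      exact h (hz'.inv.unique hw')
  rw [hlim] at hC
  have hre := (Complex.continuous_re.tendsto _).comp hC
  rw [Complex.ofReal_re] at hre
  refine hre.congr fun x => ?_
  rw [Function.comp_apply, ← Complex.ofReal_re ((1 / (x : ℝ)) * _)]
  congr 1
  push_cast
  simp_rw [Finset.mul_sum]
  have : ∀ h ∈ Finset.Icc 1 x, (1 / (x : ℂ)) * ((ramanujanSum q (n + (h : ℤ)) : ℂ) * (ramanujanSum ℓ (h : ℤ) : ℂ))
      = ∑ z ∈ primitiveRoots q ℂ, ∑ w ∈ primitiveRoots ℓ ℂ,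
        z ^ n * ((1 / (x : ℂ)) * (z * w) ^ h) := by
    intro h _
    rw [rs_eq_prim q hq, rs_eq_prim ℓ hℓ, Finset.sum_mul_sum, Finset.mul_sum]
    refine Finset.sum_congr rfl fun z hz => ?_
    rw [Finset.mul_sum]
    refine Finset.sum_congr rfl fun w hw => ?_
    have hz0 : z ≠ 0 := ((mem_primitiveRoots hq).1 hz).ne_zero hq.ne'
    rw [zpow_add₀ hz0, zpow_natCast, zpow_natCast, mul_pow]
    ring
  rw [Finset.sum_congr rfl this]
  symm
  rw [Finset.sum_comm]
  refine Finset.sum_congr rfl fun z _ => ?_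
  rw [Finset.sum_comm]
end

section
/- Let N, h be positive integers with h ≪ N, let f, g : ℕ → ℂ be essentially bounded, and suppose the shift-Ramanujan coefficients of their correlation are given by the explicit formula Ĉ_{f,g}(N,ℓ) = (𝑔̂(ℓ)/φ(ℓ))·Σ_{n ≤ N} f(n)·c_ℓ(n), where 𝑔̂(ℓ) ≪_ε (N+h)^ε/ℓ. Then the shift-Ramanujan expansion is in the first class, i.e. Ĉ_{f,g}(N,ℓ) ≪_ε N^{1+ε}/ℓ² for all ℓ ≪ N and every ε > 0. -/
open Finset in
lemma aux_divisor_bound (δ : ℝ) (hδ : 0 < δ) :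
    ∃ D : ℝ, 0 < D ∧ ∀ n : ℕ, 1 ≤ n → (n.divisors.card : ℝ) ≤ D * (n : ℝ) ^ δ := by
  obtain ⟨M, hM⟩ := exists_nat_ge ((2 : ℝ) ^ (1 / δ))
  have hl2 : 0 < Real.log 2 := Real.log_pos (by norm_num)
  set K : ℝ := 1 + 1 / (δ * Real.log 2) with hK
  have hKpos : 0 < 1 / (δ * Real.log 2) := by positivity
  have hK1 : 1 ≤ K := by linarith
  refine ⟨K ^ M, by positivity, fun n hn => ?_⟩
  have hn0 : n ≠ 0 := by omega
  rw [Nat.card_divisors hn0]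
  have hnp : (n : ℝ) ^ δ = ∏ p ∈ n.primeFactors, ((p : ℝ) ^ δ) ^ (n.factorization p) := by
    conv_lhs => rw [← Nat.prod_factorization_pow_eq_self hn0]
    rw [Finsupp.prod, Nat.support_factorization]
    push_cast
    rw [← Real.finsetProd_rpow _ _ (fun i _ => by positivity)]
    refine prod_congr rfl fun p _ => ?_
    rw [← Real.rpow_natCast, ← Real.rpow_natCast, ← Real.rpow_mul (by positivity),
      ← Real.rpow_mul (by positivity), mul_comm]
  have hterm : ∀ p ∈ n.primeFactors, ((n.factorization p : ℝ) + 1) ≤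
      (if p < M then K else 1) * ((p : ℝ) ^ δ) ^ (n.factorization p) := by
    intro p hp
    have hp2 : 2 ≤ p := (Nat.prime_of_mem_primeFactors hp).two_le
    have hp2' : (2 : ℝ) ≤ p := by exact_mod_cast hp2
    generalize n.factorization p = a
    split_ifs with h
    · have h1 : 1 + δ * Real.log 2 * a ≤ ((p : ℝ) ^ δ) ^ a := by
        calc 1 + δ * Real.log 2 * a ≤ Real.exp (δ * Real.log 2 * a) := by
              have := Real.add_one_le_exp (δ * Real.log 2 * a); linarith
          _ = ((2 : ℝ) ^ δ) ^ a := by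
              rw [← Real.rpow_natCast, ← Real.rpow_mul (by norm_num),
                Real.rpow_def_of_pos (by norm_num)]
              ring_nf
          _ ≤ _ := by gcongr
      calc (a : ℝ) + 1 ≤ K * (1 + δ * Real.log 2 * a) := by
            have h3 : 1 / (δ * Real.log 2) * (δ * Real.log 2) = 1 := by
              field_simp
            have h4 : K * (1 + δ * Real.log 2 * a) = 1 + δ * Real.log 2 * a + 1 / (δ * Real.log 2) + a := by
              rw [hK]; linear_combination (a : ℝ) * h3
            rw [h4]
            have : 0 ≤ δ * Real.log 2 * a := by positivity
            linarith
        _ ≤ _ := by gcongr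
    · have h1 : (2 : ℝ) ≤ (p : ℝ) ^ δ := by
        have : (2 : ℝ) ^ (1 / δ) ≤ p := hM.trans (by exact_mod_cast not_lt.mp h)
        calc (2 : ℝ) = ((2 : ℝ) ^ (1 / δ)) ^ δ := by
              rw [← Real.rpow_mul (by norm_num)]; field_simp; simp
          _ ≤ _ := by gcongr
      rw [one_mul]
      calc (a : ℝ) + 1 ≤ 2 ^ a := by exact_mod_cast Nat.lt_two_pow_self (n := a)
        _ ≤ _ := by gcongr
  push_cast
  calc _ ≤ ∏ p ∈ n.primeFactors, (if p < M then K else 1) * ((p : ℝ) ^ δ) ^ (n.factorization p) :=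
        prod_le_prod (fun i _ => by positivity) hterm
    _ = (∏ p ∈ n.primeFactors, (if p < M then K else 1)) * (n : ℝ) ^ δ := by
        rw [prod_mul_distrib, hnp]
    _ ≤ _ := by
        gcongr
        rw [prod_ite, prod_const, prod_const_one, mul_one]
        refine pow_le_pow_right₀ hK1 ?_
        calc _ ≤ (range M).card := card_le_card (by intro x; simp)
          _ = M := by simp

lemma aux_totient (n : ℕ) : n ≤ n.divisors.card * n.totient := by
  rcases Nat.eq_zero_or_pos n with rfl | hn
  · simp
  conv_lhs => rw [← Nat.sum_totient n]
  rw [← smul_eq_mul]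
  refine Finset.sum_le_card_nsmul _ _ _ fun d hd => ?_
  exact Nat.le_of_dvd (Nat.totient_pos.2 hn) (Nat.totient_dvd_of_dvd (Nat.dvd_of_mem_divisors hd))

lemma aux_ram (l n : ℕ) (hl : 1 ≤ l) : ‖(ramanujanSum l (n : ℤ) : ℂ)‖ ≤
    ∑ d ∈ l.divisors, if d ∣ n then (d : ℝ) else 0 := by
  unfold ramanujanSum
  push_cast
  refine (norm_sum_le _ _).trans ?_
  rw [← Finset.sum_filter]
  have hs : (l.gcd (n : ℤ).natAbs).divisors = l.divisors.filter (· ∣ n) := by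
    ext d
    have : l.gcd n ≠ 0 := (Nat.gcd_pos_of_pos_left n hl).ne'
    simp [Nat.dvd_gcd_iff]
    omega
  rw [hs]
  refine Finset.sum_le_sum fun d _ => ?_
  rw [norm_mul]
  have h1 : ‖((ArithmeticFunction.moebius (l / d) : ℤ) : ℂ)‖ ≤ 1 := by
    rw [Complex.norm_intCast]
    exact_mod_cast ArithmeticFunction.abs_moebius_le_one
  have h2 : ‖((d : ℕ) : ℂ)‖ = d := by simp
  calc _ ≤ ‖((d : ℕ) : ℂ)‖ * 1 := by gcongr
    _ = d := by rw [h2, mul_one]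

lemma aux_ram_sum (l N : ℕ) (hl : 1 ≤ l) :
    ∑ n ∈ Finset.Icc 1 N, ‖(ramanujanSum l (n : ℤ) : ℂ)‖ ≤ N * l.divisors.card := by
  refine (Finset.sum_le_sum fun n _ => aux_ram l n hl).trans ?_
  rw [Finset.sum_comm, mul_comm, ← nsmul_eq_mul]
  refine Finset.sum_le_card_nsmul _ _ _ fun d _ => ?_
  rw [← Finset.sum_filter, Finset.sum_const, nsmul_eq_mul]
  have := Nat.Ioc_filter_dvd_card_eq_div N d
  have h2 : Finset.Icc 1 N = Finset.Ioc 0 N := by ext; simp; omega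
  rw [h2, this]
  exact_mod_cast Nat.div_mul_le_self N d

/-- let `N, h` be positive integers with `h ≪ N`, let `f, g` be
essentially bounded, and suppose the shift-Ramanujan coefficients of their
correlation are given by the explicit formula
`Ĉ_{f,g}(N,ℓ) = (ĝ(ℓ)/φ(ℓ)) ∑_{n ≤ N} f(n) c_ℓ(n)`, where
`ĝ(ℓ) ≪_ε (N+h)^ε / ℓ`.  Then the shift-Ramanujan expansion is in the first
class: `Ĉ_{f,g}(N,ℓ) ≪_ε N^{1+ε}/ℓ²` for all `ℓ ≪ N` and every `ε > 0`. -/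
theorem sre_first_class
    (f g : ℕ → ℂ)
    (hf : ∀ ε : ℝ, 0 < ε → ∃ c : ℝ, 0 < c ∧ ∀ n : ℕ, 1 ≤ n → ‖f n‖ ≤ c * (n : ℝ) ^ ε)
    (hg : ∀ ε : ℝ, 0 < ε → ∃ c : ℝ, 0 < c ∧ ∀ n : ℕ, 1 ≤ n → ‖g n‖ ≤ c * (n : ℝ) ^ ε)
    (ghat : ℕ → ℕ → ℕ → ℂ)  -- `ghat N h ℓ` : Ramanujan coefficient of `g` (truncated at `N+h`)
    (hghat : ∀ ε : ℝ, 0 < ε → ∃ c : ℝ, 0 < c ∧ ∀ N h ℓ : ℕ, 0 < N → 1 ≤ ℓ →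
      ‖ghat N h ℓ‖ ≤ c * ((N + h : ℕ) : ℝ) ^ ε / (ℓ : ℝ))
    (Chat : ℕ → ℕ → ℕ → ℂ)  -- `Chat N h ℓ` : shift-Ramanujan coefficient `Ĉ_{f,g}(N,ℓ)`
    (hChat : ∀ N h ℓ : ℕ, 0 < N → 0 < h → 1 ≤ ℓ →
      Chat N h ℓ = ghat N h ℓ / (Nat.totient ℓ : ℂ) *
        ∑ n ∈ Finset.Icc 1 N, f n * (ramanujanSum ℓ (n : ℤ) : ℂ))
    (A B : ℝ) (hA : 0 < A) (hB : 0 < B) :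
    ∀ ε : ℝ, 0 < ε → ∃ C : ℝ, 0 < C ∧ ∀ N h ℓ : ℕ, 0 < N → 0 < h → (h : ℝ) ≤ A * N →
      1 ≤ ℓ → (ℓ : ℝ) ≤ B * N →
      ‖Chat N h ℓ‖ ≤ C * (N : ℝ) ^ (1 + ε) / (ℓ : ℝ) ^ 2 := by
  intro ε hε
  have hη : 0 < ε / 4 := by positivity
  set η := ε / 4 with hηd
  obtain ⟨c1, hc1, H1⟩ := hghat η hη
  obtain ⟨c2, hc2, H2⟩ := hf η hη
  obtain ⟨D, hD, H3⟩ := aux_divisor_bound η hη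
  refine ⟨c1 * (1 + A) ^ η * c2 * (D * B ^ η) ^ 2, by positivity, ?_⟩
  intro N h l hN hh hhA hl hlB
  have hN' : (0 : ℝ) < N := by exact_mod_cast hN
  have hl' : (0 : ℝ) < l := by exact_mod_cast hl
  have hφ : (0 : ℝ) < l.totient := by exact_mod_cast Nat.totient_pos.2 hl
  have hdφ : (l : ℝ) ≤ l.divisors.card * l.totient := by exact_mod_cast aux_totient l
  rw [hChat N h l hN hh hl, norm_mul, norm_div]
  have hg1 : ‖ghat N h l‖ ≤ c1 * ((1 + A) ^ η * (N : ℝ) ^ η) / l := by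
    refine (H1 N h l hN hl).trans ?_
    rw [← Real.mul_rpow (by positivity) hN'.le]
    gcongr
    push_cast
    linarith
  have hd : (l.divisors.card : ℝ) ≤ D * B ^ η * (N : ℝ) ^ η := by
    refine (H3 l hl).trans ?_
    rw [mul_assoc, ← Real.mul_rpow hB.le hN'.le]
    gcongr
  have hs : ‖∑ n ∈ Finset.Icc 1 N, f n * (ramanujanSum l (n : ℤ) : ℂ)‖ ≤
      c2 * (N : ℝ) ^ η * (N * l.divisors.card) := by
    refine (norm_sum_le _ _).trans ?_
    refine le_trans ?_ (mul_le_mul_of_nonneg_left (aux_ram_sum l N hl) (by positivity))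
    rw [Finset.mul_sum]
    refine Finset.sum_le_sum fun n hn => ?_
    rw [Finset.mem_Icc] at hn
    rw [norm_mul]
    gcongr
    refine (H2 n hn.1).trans ?_
    gcongr
    exact hn.2
  have hφ' : 1 / (l.totient : ℝ) ≤ l.divisors.card / l := by
    rw [div_le_div_iff₀ hφ hl']; linarith
  have hpow : (N : ℝ) ^ (1 + ε) = N * ((N : ℝ) ^ η) ^ 4 := by
    rw [Real.rpow_add hN', Real.rpow_one, ← Real.rpow_natCast, ← Real.rpow_mul hN'.le]
    congr 2
    rw [hηd]; push_cast; ring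
  rw [hpow]
  have hnt : ‖(l.totient : ℂ)‖ = l.totient := by simp
  rw [hnt, div_eq_mul_one_div ‖ghat N h l‖]
  calc _ ≤ (c1 * ((1 + A) ^ η * (N : ℝ) ^ η) / l) * (l.divisors.card / l) *
        (c2 * (N : ℝ) ^ η * (N * l.divisors.card)) := by gcongr
    _ ≤ (c1 * ((1 + A) ^ η * (N : ℝ) ^ η) / l) * ((D * B ^ η * (N : ℝ) ^ η) / l) *
        (c2 * (N : ℝ) ^ η * (N * (D * B ^ η * (N : ℝ) ^ η))) := by gcongr
    _ = _ := by field_simp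
end

section
/- Let f : ℕ → ℂ be a truncated divisor sum of range N, i.e. f(n) = Σ_{d | n, d ≤ N} f'(d), with Ramanujan coefficients 𝑓̂(q) = (1/q)·Σ_{n ≤ N/q} f'(qn)/n. Then the Eratosthenes transform is recovered by the inversion formula f'(d) = d·Σ_{j ≤ N/d} μ(j)·𝑓̂(dj) for every d ≤ N. -/
theorem sum_reindex_aux (M : ℕ) (F : ℕ → ℕ → ℂ) :
    ∑ j ∈ Finset.Icc 1 M, ∑ n ∈ Finset.Icc 1 (M / j), F j n =
      ∑ m ∈ Finset.Icc 1 M, ∑ x ∈ m.divisorsAntidiagonal, F x.1 x.2 := by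
  rw [Finset.sum_sigma', Finset.sum_sigma']
  refine Finset.sum_bij' (fun a _ => (⟨a.1 * a.2, (a.1, a.2)⟩ : (_ : ℕ) × (ℕ × ℕ)))
    (fun b _ => (⟨b.2.1, b.2.2⟩ : (_ : ℕ) × ℕ)) ?_ ?_ ?_ ?_ ?_
  · rintro ⟨j, n⟩ h
    simp only [Finset.mem_sigma, Finset.mem_Icc, Nat.mem_divisorsAntidiagonal] at h ⊢
    obtain ⟨⟨h1, h2⟩, h3, h4⟩ := h
    have h5 : j * n ≤ M := by
      rw [mul_comm]; exact (Nat.le_div_iff_mul_le (by omega)).1 h4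
    have h6 : 0 < j * n := Nat.mul_pos h1 h3
    exact ⟨⟨h6, h5⟩, trivial, h6.ne'⟩
  · rintro ⟨m, a, b⟩ h
    simp only [Finset.mem_sigma, Finset.mem_Icc, Nat.mem_divisorsAntidiagonal] at h ⊢
    obtain ⟨⟨h1, h2⟩, rfl, h4⟩ := h
    have ha : 0 < a := Nat.pos_of_mul_pos_right h1
    have hb : 0 < b := Nat.pos_of_mul_pos_left h1
    refine ⟨⟨ha, ?_⟩, hb, (Nat.le_div_iff_mul_le ha).2 (by rwa [mul_comm])⟩
    exact (Nat.le_mul_of_pos_right a hb).trans h2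
  · rintro ⟨j, n⟩ h
    rfl
  · rintro ⟨m, a, b⟩ h
    simp only [Finset.mem_sigma, Nat.mem_divisorsAntidiagonal] at h
    obtain ⟨_, rfl, _⟩ := h
    rfl
  · rintro ⟨j, n⟩ h
    rfl

/-- let `f : ℕ → ℂ` be a truncated divisor sum of range `N`,
i.e. `f(n) = ∑_{d ∣ n, d ≤ N} f'(d)`, with Ramanujan coefficients
`f̂(q) = (1/q) ∑_{n ≤ N/q} f'(qn)/n`.  Then the Eratosthenes transform is
recovered by `f'(d) = d ∑_{j ≤ N/d} μ(j) f̂(dj)` for every `d ≤ N`. -/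
theorem eratosthenes_transform_inversion
    (N : ℕ) (hN : 0 < N) (f f' : ℕ → ℂ)
    (hf : ∀ n : ℕ, 0 < n → f n = ∑ d ∈ n.divisors.filter (· ≤ N), f' d)
    (d : ℕ) (hd : 1 ≤ d) (hdN : d ≤ N) :
    f' d = (d : ℂ) * ∑ j ∈ Finset.Icc 1 (N / d),
      (ArithmeticFunction.moebius j : ℂ) *
        ((1 / ((d * j : ℕ) : ℂ)) *
          ∑ n ∈ Finset.Icc 1 (N / (d * j)), f' (d * j * n) / (n : ℂ)) := by
  have hd0 : (d : ℂ) ≠ 0 := by exact_mod_cast (by omega : d ≠ 0)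
  have hM : 1 ≤ N / d := (Nat.one_le_div_iff (by omega)).2 hdN
  have key : ∀ j ∈ Finset.Icc 1 (N / d), (d : ℂ) * ((ArithmeticFunction.moebius j : ℂ) *
        ((1 / ((d * j : ℕ) : ℂ)) *
          ∑ n ∈ Finset.Icc 1 (N / (d * j)), f' (d * j * n) / (n : ℂ))) =
      ∑ n ∈ Finset.Icc 1 (N / d / j), (ArithmeticFunction.moebius j : ℂ) *
        (f' (d * (j * n)) / ((j * n : ℕ) : ℂ)) := by
    intro j hj
    have hj0 : (j : ℂ) ≠ 0 := by
      have := (Finset.mem_Icc.1 hj).1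
      exact_mod_cast (by omega : j ≠ 0)
    rw [Nat.div_div_eq_div_mul, Finset.mul_sum, Finset.mul_sum, Finset.mul_sum]
    refine Finset.sum_congr rfl fun n hn => ?_
    have hn0 : (n : ℂ) ≠ 0 := by
      have := (Finset.mem_Icc.1 hn).1
      exact_mod_cast (by omega : n ≠ 0)
    rw [mul_assoc d j n]
    push_cast
    field_simp
  rw [Finset.mul_sum, Finset.sum_congr rfl key,
    sum_reindex_aux (N / d) fun j n => (ArithmeticFunction.moebius j : ℂ) *
        (f' (d * (j * n)) / ((j * n : ℕ) : ℂ))]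
  have key2 : ∀ m ∈ Finset.Icc 1 (N / d), (∑ x ∈ m.divisorsAntidiagonal,
      (ArithmeticFunction.moebius x.1 : ℂ) *
        (f' (d * (x.1 * x.2)) / ((x.1 * x.2 : ℕ) : ℂ))) =
      if m = 1 then f' d else 0 := by
    intro m hm
    have h1 : (∑ x ∈ m.divisorsAntidiagonal, (ArithmeticFunction.moebius x.1 : ℂ) *
        (f' (d * (x.1 * x.2)) / ((x.1 * x.2 : ℕ) : ℂ))) =
        ∑ x ∈ m.divisorsAntidiagonal, (ArithmeticFunction.moebius x.1 : ℂ) *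
        (f' (d * m) / (m : ℂ)) := by
      refine Finset.sum_congr rfl fun x hx => ?_
      rw [(Nat.mem_divisorsAntidiagonal.1 hx).1]
    have h2 : (∑ i ∈ m.divisors, ArithmeticFunction.moebius i) = if m = 1 then 1 else 0 := by
      rw [← ArithmeticFunction.coe_mul_zeta_apply, ArithmeticFunction.moebius_mul_coe_zeta,
        ArithmeticFunction.one_apply]
    rw [h1, ← Finset.sum_mul,
      Nat.sum_divisorsAntidiagonal (fun i _ => (ArithmeticFunction.moebius i : ℂ)),
      ← Int.cast_sum, h2]
    split_ifs with h
    · subst h; simp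
    · simp
  rw [Finset.sum_congr rfl key2, Finset.sum_ite_eq', if_pos (Finset.mem_Icc.2 ⟨le_rfl, hM⟩)]
end

section
/- Let h ≥ 0 be an integer and let f, g : ℕ → ℂ have finite Ramanujan expansions (i.e. their Eratosthenes transforms f', g' have finite support). Then the singular series satisfies 𝔖_{f,g}(h) = Σ_{l | h} l · Σ_d (f'(d)/d) · Σ_{q : gcd(q,d) = l} g'(q)/q, where for h = 0 the condition l | h means all l ≥ 1. -/
lemma sum_ramanujanSum (h k : ℕ) (hk : 0 < k) :
    ∑ q ∈ k.divisors, ramanujanSum q (h : ℤ) = if k ∣ h then (k : ℤ) else 0 := by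
  refine (ArithmeticFunction.sum_eq_iff_sum_mul_moebius_eq (R := ℤ)
    (f := fun q => ramanujanSum q (h : ℤ)) (g := fun k => if k ∣ h then (k : ℤ) else 0)).2 ?_ k hk
  intro n hn
  simp only [Int.cast_id]
  rw [Nat.sum_divisorsAntidiagonal' (f := fun a b =>
    ((ArithmeticFunction.moebius a : ℤ) : ℤ) * (if b ∣ h then (b : ℤ) else 0))]
  have hs : (Nat.gcd n h).divisors = n.divisors.filter (fun d => d ∣ h) := by
    ext d
    have : Nat.gcd n h ≠ 0 := (Nat.gcd_pos_of_pos_left _ hn).ne'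
    simp [Nat.dvd_gcd_iff, this, hn.ne']
  simp only [ramanujanSum, Int.natAbs_natCast, hs, Finset.sum_filter]
  refine Finset.sum_congr rfl fun d _ => ?_
  split_ifs <;> simp [mul_comm]

lemma tsum_Icc (N : ℕ) (F : ℕ → ℂ) (P : ℕ → Prop) [DecidablePred P]
    (hF : ∀ d, N < d → P d → F d = 0) :
    (∑' m : ℕ, if 1 ≤ m ∧ P m then F m else 0)
      = ∑ m ∈ Finset.Icc 1 N, if P m then F m else 0 := by
  rw [tsum_eq_sum (s := Finset.Icc 1 N)]
  · refine Finset.sum_congr rfl fun m hm => ?_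
    simp [(Finset.mem_Icc.1 hm).1]
  · intro m hm
    rw [Finset.mem_Icc] at hm
    split_ifs with h1
    · exact hF m (by omega) h1.2
    · rfl

/-- Lemma A.6: let `h ≥ 0` be an integer and let `f, g : ℕ → ℂ`
have finite Ramanujan expansions (their Eratosthenes transforms `f'`, `g'` have
finite support).  Then the singular series
`𝔖_{f,g}(h) = ∑_{q ≥ 1} f̂(q) ĝ(q) c_q(h)`, with
`f̂(q) = ∑_{m ≡ 0 (mod q)} f'(m)/m`, satisfies
`𝔖_{f,g}(h) = ∑_{l ∣ h} l ∑_d (f'(d)/d) ∑_{q : gcd(q,d) = l} g'(q)/q`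
(where for `h = 0` the condition `l ∣ h` holds for every `l ≥ 1`). -/
theorem singular_series_as_singular_sum
    (h : ℕ) (f' g' : ℕ → ℂ)
    (hf : ∃ D : ℕ, ∀ d : ℕ, D < d → f' d = 0)
    (hg : ∃ D : ℕ, ∀ d : ℕ, D < d → g' d = 0) :
    (∑' q : ℕ, if 1 ≤ q then
        (∑' m : ℕ, if 1 ≤ m ∧ q ∣ m then f' m / (m : ℂ) else 0) *
          (∑' m : ℕ, if 1 ≤ m ∧ q ∣ m then g' m / (m : ℂ) else 0) *
          (ramanujanSum q (h : ℤ) : ℂ)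
      else 0)
    = ∑' l : ℕ, if 1 ≤ l ∧ l ∣ h then
        (l : ℂ) * ∑' d : ℕ, (if 1 ≤ d then
          f' d / (d : ℂ) * ∑' q : ℕ, (if 1 ≤ q ∧ Nat.gcd q d = l then g' q / (q : ℂ) else 0)
        else 0)
      else 0 := by
  obtain ⟨A, hA⟩ := hf
  obtain ⟨B, hB⟩ := hg
  obtain ⟨N, hNA, hNB⟩ : ∃ N, A ≤ N ∧ B ≤ N := ⟨max A B, le_max_left _ _, le_max_right _ _⟩
  have hF : ∀ d, N < d → f' d / (d : ℂ) = 0 := fun d hd => by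
    rw [hA d (by omega), zero_div]
  have hG : ∀ d, N < d → g' d / (d : ℂ) = 0 := fun d hd => by
    rw [hB d (by omega), zero_div]
  generalize hFd : (fun d : ℕ => f' d / (d : ℂ)) = F
  generalize hGd : (fun d : ℕ => g' d / (d : ℂ)) = G
  have hF1 : ∀ d : ℕ, f' d / (d : ℂ) = F d := fun d => by rw [← hFd]
  have hG1 : ∀ d : ℕ, g' d / (d : ℂ) = G d := fun d => by rw [← hGd]
  simp only [hF1, hG1] at hF hG ⊢
  have e1 : ∀ q, (∑' m : ℕ, if 1 ≤ m ∧ q ∣ m then F m else 0)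
      = ∑ m ∈ Finset.Icc 1 N, if q ∣ m then F m else 0 :=
    fun q => tsum_Icc N F (fun m => q ∣ m) (fun d hd _ => hF d hd)
  have e2 : ∀ q, (∑' m : ℕ, if 1 ≤ m ∧ q ∣ m then G m else 0)
      = ∑ m ∈ Finset.Icc 1 N, if q ∣ m then G m else 0 :=
    fun q => tsum_Icc N G (fun m => q ∣ m) (fun d hd _ => hG d hd)
  have e3 : ∀ l d, (∑' q : ℕ, if 1 ≤ q ∧ Nat.gcd q d = l then G q else 0)
      = ∑ q ∈ Finset.Icc 1 N, if Nat.gcd q d = l then G q else 0 :=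
    fun l d => tsum_Icc N G (fun q => Nat.gcd q d = l) (fun d hd _ => hG d hd)
  have e4 : ∀ H : ℕ → ℂ, (∀ d, N < d → H d = 0) →
      (∑' q : ℕ, if 1 ≤ q then H q else 0) = ∑ q ∈ Finset.Icc 1 N, H q := by
    intro H hH
    have := tsum_Icc N H (fun _ => True) (fun d hd _ => hH d hd)
    simpa using this
  simp only [e1, e2, e3]
  rw [e4]
  swap
  · intro q hq
    rw [Finset.sum_eq_zero (s := Finset.Icc 1 N) (f := fun m => if q ∣ m then F m else 0)]
    · simp
    · intro m hm
      rw [Finset.mem_Icc] at hm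
      rw [if_neg]
      intro hd
      have := Nat.le_of_dvd (by omega) hd
      omega
  have e5 : ∀ l, (∑' d : ℕ, if 1 ≤ d then
      F d * ∑ q ∈ Finset.Icc 1 N, (if Nat.gcd q d = l then G q else 0) else 0)
      = ∑ d ∈ Finset.Icc 1 N,
        F d * ∑ q ∈ Finset.Icc 1 N, (if Nat.gcd q d = l then G q else 0) := by
    intro l
    apply e4
    intro d hd
    rw [hF d hd, zero_mul]
  simp only [e5]
  rw [tsum_Icc N _ (fun l => l ∣ h)]
  swap
  · intro l hl _
    rw [Finset.sum_eq_zero, mul_zero]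
    intro d hd
    rw [Finset.sum_eq_zero, mul_zero]
    intro q hq
    rw [Finset.mem_Icc] at hd hq
    rw [if_neg]
    intro e
    have := Nat.gcd_le_left d (show 0 < q by omega)
    omega
  have key : ∀ m ∈ Finset.Icc 1 N, ∀ n ∈ Finset.Icc 1 N,
      (∑ q ∈ Finset.Icc 1 N, if q ∣ m ∧ q ∣ n then (ramanujanSum q (h : ℤ) : ℂ) else 0)
      = ∑ l ∈ Finset.Icc 1 N, if l ∣ h ∧ Nat.gcd n m = l then (l : ℂ) else 0 := by
    intro m hm n hn
    rw [Finset.mem_Icc] at hm hn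
    have hpos : 0 < Nat.gcd n m := Nat.gcd_pos_of_pos_left _ (by omega)
    have hle : Nat.gcd n m ≤ N := (Nat.gcd_le_left m (by omega)).trans hn.2
    have hs : (Finset.Icc 1 N).filter (fun q => q ∣ m ∧ q ∣ n) = (Nat.gcd n m).divisors := by
      ext q
      rw [Finset.mem_filter, Finset.mem_Icc, Nat.mem_divisors, Nat.dvd_gcd_iff]
      constructor
      · rintro ⟨_, h1, h2⟩
        exact ⟨⟨h2, h1⟩, hpos.ne'⟩
      · rintro ⟨⟨h2, h1⟩, _⟩
        have h3 := Nat.le_of_dvd (by omega) h1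
        have h4 := Nat.pos_of_dvd_of_pos h1 (by omega)
        exact ⟨⟨h4, by omega⟩, h1, h2⟩
    rw [← Finset.sum_filter, hs, ← Int.cast_sum, sum_ramanujanSum h _ hpos,
      Finset.sum_eq_single (Nat.gcd n m)]
    · by_cases hd : Nat.gcd n m ∣ h <;> simp [hd]
    · intro l _ hl
      rw [if_neg]
      exact fun hh => hl hh.2.symm
    · intro hh
      exact absurd (Finset.mem_Icc.2 ⟨hpos, hle⟩) hh
  have L : ∀ q, (∑ m ∈ Finset.Icc 1 N, if q ∣ m then F m else 0) *
      (∑ m ∈ Finset.Icc 1 N, if q ∣ m then G m else 0) * (ramanujanSum q (h : ℤ) : ℂ)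
      = ∑ m ∈ Finset.Icc 1 N, ∑ n ∈ Finset.Icc 1 N, F m * G n *
        (if q ∣ m ∧ q ∣ n then (ramanujanSum q (h : ℤ) : ℂ) else 0) := by
    intro q
    rw [Finset.sum_mul_sum, Finset.sum_mul]
    refine Finset.sum_congr rfl fun m _ => ?_
    rw [Finset.sum_mul]
    refine Finset.sum_congr rfl fun n _ => ?_
    by_cases h1 : q ∣ m <;> by_cases h2 : q ∣ n <;> simp [h1, h2]
  have R : ∀ l : ℕ, (if l ∣ h then (l : ℂ) * ∑ d ∈ Finset.Icc 1 N,
        F d * ∑ q ∈ Finset.Icc 1 N, (if Nat.gcd q d = l then G q else 0) else 0)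
      = ∑ m ∈ Finset.Icc 1 N, ∑ n ∈ Finset.Icc 1 N, F m * G n *
        (if l ∣ h ∧ Nat.gcd n m = l then (l : ℂ) else 0) := by
    intro l
    by_cases h0 : l ∣ h
    · rw [if_pos h0, Finset.mul_sum]
      refine Finset.sum_congr rfl fun m _ => ?_
      rw [Finset.mul_sum, Finset.mul_sum]
      refine Finset.sum_congr rfl fun n _ => ?_
      by_cases h2 : Nat.gcd n m = l
      · rw [if_pos h2, if_pos ⟨h0, h2⟩]; ring
      · rw [if_neg h2, if_neg (fun hh => h2 hh.2)]; ring
    · simp [h0]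
  have swap : ∀ K : ℕ → ℕ → ℕ → ℂ,
      ∑ q ∈ Finset.Icc 1 N, ∑ m ∈ Finset.Icc 1 N, ∑ n ∈ Finset.Icc 1 N, F m * G n * K q m n
      = ∑ m ∈ Finset.Icc 1 N, ∑ n ∈ Finset.Icc 1 N,
        F m * G n * ∑ q ∈ Finset.Icc 1 N, K q m n := by
    intro K
    rw [Finset.sum_comm]
    refine Finset.sum_congr rfl fun m _ => ?_
    rw [Finset.sum_comm]
    refine Finset.sum_congr rfl fun n _ => ?_
    rw [Finset.mul_sum]
  simp only [L, R]
  rw [swap (fun q m n => if q ∣ m ∧ q ∣ n then (ramanujanSum q (h : ℤ) : ℂ) else 0),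
    swap (fun l m n => if l ∣ h ∧ Nat.gcd n m = l then (l : ℂ) else 0)]
  refine Finset.sum_congr rfl fun m hm => Finset.sum_congr rfl fun n hn => ?_
  rw [key m hm n hn]
end

section
/- Let G, q, t, N be positive integers, let f : ℕ → ℂ be essentially bounded, suppose every prime factor of q exceeds G (i.e. gcd(q, P(G)) = 1), and let a be an integer with 0 < |a| ≤ G. Then Σ_{n ≤ N, n ≡ a (mod t), gcd(n,q)=1} f(n) = Σ_{n ≤ N, n ≡ a (mod t)} f(n) + O_ε((qN)^ε · (N/(tG) + 1)) for every ε > 0. -/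
lemma card_modEq_le (S : Finset ℕ) (N r : ℕ) (hS : ∀ n ∈ S, n ≤ N)
    (hr : ∀ n ∈ S, ∀ m ∈ S, n % r = m % r) : (S.card : ℝ) ≤ (N : ℝ) / r + 1 := by
  have h1 : S.card ≤ (Finset.range (N / r + 1)).card := by
    apply Finset.card_le_card_of_injOn (fun n => n / r)
    · intro n hn
      have := Nat.div_le_div_right (c := r) (hS n hn)
      simp only [Finset.coe_range, Set.mem_Iio]
      omega
    · intro n hn m hm h
      have h2 := hr n hn m hm
      simp only at h
      rw [← Nat.div_add_mod n r, ← Nat.div_add_mod m r, h, h2]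
  rw [Finset.card_range] at h1
  have h2 : (S.card : ℝ) ≤ ((N / r : ℕ) : ℝ) + 1 := by exact_mod_cast h1
  have h3 : ((N / r : ℕ) : ℝ) ≤ (N : ℝ) / r := Nat.cast_div_le
  linarith

lemma card_primeFactors_le (q : ℕ) (hq : 0 < q) (ε : ℝ) (hε : 0 < ε) :
    (q.primeFactors.card : ℝ) ≤ (1 / (ε * Real.log 2)) * (q : ℝ) ^ ε := by
  have h1 : 2 ^ q.primeFactors.card ≤ q := by
    calc 2 ^ q.primeFactors.card ≤ ∏ p ∈ q.primeFactors, p :=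
          Finset.pow_card_le_prod _ _ _ (fun p hp => (Nat.prime_of_mem_primeFactors hp).two_le)
      _ ≤ q := Nat.le_of_dvd hq (Nat.prod_primeFactors_dvd q)
  have h2 : ((2 : ℝ) ^ q.primeFactors.card) ≤ (q : ℝ) := by exact_mod_cast h1
  have h3 := Real.log_le_log (by positivity) h2
  rw [Real.log_pow] at h3
  have h4 : Real.log q ≤ (q : ℝ) ^ ε / ε := Real.log_le_rpow_div (by positivity) hε
  have hl : 0 < Real.log 2 := Real.log_pos (by norm_num)
  have h5 : (1 / (ε * Real.log 2)) * (q : ℝ) ^ ε = ((q : ℝ) ^ ε / ε) / Real.log 2 := by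
    field_simp
  rw [h5, le_div_iff₀ hl]
  linarith


/-- `P(G)`: the product of all primes `p ≤ G`. -/
def primesProd (G : ℕ) : ℕ := ∏ p ∈ (Finset.Icc 1 G).filter Nat.Prime, p

/-- Lemma A.5, second formula: let `G, q, t, N` be positive
integers, `f : ℕ → ℂ` essentially bounded, suppose every prime factor of `q`
exceeds `G` (`gcd(q, P(G)) = 1`), and let `a` be an integer with
`0 < |a| ≤ G`.  Then
`∑_{n ≤ N, n ≡ a (mod t), gcd(n,q)=1} f(n) = ∑_{n ≤ N, n ≡ a (mod t)} f(n)
  + O_ε((qN)^ε (N/(tG) + 1))`. -/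
theorem remove_coprimality_condition_in_progressions
    (f : ℕ → ℂ)
    (hf : ∀ ε : ℝ, 0 < ε → ∃ c : ℝ, 0 < c ∧ ∀ n : ℕ, 1 ≤ n → ‖f n‖ ≤ c * (n : ℝ) ^ ε)
    (ε : ℝ) (hε : 0 < ε) :
    ∃ C : ℝ, 0 < C ∧ ∀ (G q t N : ℕ) (a : ℤ), 0 < G → 0 < q → 0 < t → 0 < N →
      Nat.Coprime q (primesProd G) → a ≠ 0 → |a| ≤ (G : ℤ) →
      ‖(∑ n ∈ Finset.Icc 1 N,
            if (n : ℤ) ≡ a [ZMOD (t : ℤ)] ∧ Nat.Coprime n q then f n else 0)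
          - ∑ n ∈ Finset.Icc 1 N, (if (n : ℤ) ≡ a [ZMOD (t : ℤ)] then f n else 0)‖
        ≤ C * ((q * N : ℕ) : ℝ) ^ ε * ((N : ℝ) / ((t : ℝ) * G) + 1) := by
  obtain ⟨c, hc, hfc⟩ := hf ε hε
  have hl : 0 < Real.log 2 := Real.log_pos (by norm_num)
  refine ⟨c * (1 / (ε * Real.log 2)), by positivity, ?_⟩
  intro G q t N a hG hq ht hN hcop ha haG
  set D : ℕ → Finset ℕ := fun p => (Finset.Icc 1 N).filter
    (fun n => (n : ℤ) ≡ a [ZMOD (t : ℤ)] ∧ p ∣ n) with hD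
  set B : Finset ℕ := (Finset.Icc 1 N).filter
    (fun n => (n : ℤ) ≡ a [ZMOD (t : ℤ)] ∧ ¬ Nat.Coprime n q) with hB
  have hG' : (0 : ℝ) < G := by exact_mod_cast hG
  have ht' : (0 : ℝ) < t := by exact_mod_cast ht
  have hdiff : (∑ n ∈ Finset.Icc 1 N,
            if (n : ℤ) ≡ a [ZMOD (t : ℤ)] ∧ Nat.Coprime n q then f n else 0)
          - ∑ n ∈ Finset.Icc 1 N, (if (n : ℤ) ≡ a [ZMOD (t : ℤ)] then f n else 0)
          = - ∑ n ∈ B, f n := by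
    rw [hB, Finset.sum_filter, ← Finset.sum_sub_distrib, ← Finset.sum_neg_distrib]
    apply Finset.sum_congr rfl
    intro n _
    split_ifs <;> first | (simp; done) | (exfalso; tauto)
  have hgt : ∀ p ∈ q.primeFactors, G < p := by
    intro p hp
    by_contra hle
    have hpp := Nat.prime_of_mem_primeFactors hp
    have hd : p ∣ primesProd G := by
      unfold primesProd
      apply Finset.dvd_prod_of_mem (fun p => p)
      simp only [Finset.mem_filter, Finset.mem_Icc]
      exact ⟨⟨hpp.one_le, by omega⟩, hpp⟩
    exact Nat.not_coprime_of_dvd_of_dvd hpp.one_lt (Nat.dvd_of_mem_primeFactors hp) hd hcop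
  have hDcard : ∀ p ∈ q.primeFactors, ((D p).card : ℝ) ≤ (N : ℝ) / ((t : ℝ) * G) + 1 := by
    intro p hp
    have hpp := Nat.prime_of_mem_primeFactors hp
    have hGp := hgt p hp
    have hGp' : (G : ℝ) ≤ p := by exact_mod_cast hGp.le
    rcases (D p).eq_empty_or_nonempty with he | ⟨n0, hn0⟩
    · rw [he]; simp only [Finset.card_empty, Nat.cast_zero]; positivity
    have hcp : Nat.Coprime t p := by
      rw [Nat.coprime_comm, Nat.Prime.coprime_iff_not_dvd hpp]
      intro hpt
      simp only [hD, Finset.mem_filter] at hn0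
      obtain ⟨_, hm, hpn⟩ := hn0
      have h1 : (p : ℤ) ∣ a - n0 := (Int.natCast_dvd_natCast.mpr hpt).trans hm.dvd
      have h2 : (p : ℤ) ∣ a := by
        have := dvd_add h1 (Int.natCast_dvd_natCast.mpr hpn)
        simpa using this
      have h3 := Int.le_of_dvd (abs_pos.mpr ha) ((dvd_abs _ _).mpr h2)
      omega
    have h := card_modEq_le (D p) N (t * p) (by
      intro n hn
      simp only [hD, Finset.mem_filter, Finset.mem_Icc] at hn
      exact hn.1.2) (by
      intro n hn m hm
      simp only [hD, Finset.mem_filter] at hn hm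
      have e1 : n ≡ m [MOD t] := Int.natCast_modEq_iff.mp (hn.2.1.trans hm.2.1.symm)
      have e2 : n ≡ m [MOD p] :=
        (Nat.modEq_zero_iff_dvd.mpr hn.2.2).trans (Nat.modEq_zero_iff_dvd.mpr hm.2.2).symm
      exact (Nat.modEq_and_modEq_iff_modEq_mul hcp).mp ⟨e1, e2⟩)
    push_cast at h
    refine h.trans ?_
    gcongr
  have hBsub : B ⊆ q.primeFactors.biUnion D := by
    intro n hn
    simp only [hB, Finset.mem_filter] at hn
    obtain ⟨hnI, hm, hnc⟩ := hn
    obtain ⟨p, hpp, hpn, hpq⟩ := Nat.Prime.not_coprime_iff_dvd.mp hnc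
    simp only [Finset.mem_biUnion, hD, Finset.mem_filter]
    exact ⟨p, Nat.mem_primeFactors.mpr ⟨hpp, hpq, hq.ne'⟩, hnI, hm, hpn⟩
  have hBcard : (B.card : ℝ) ≤ q.primeFactors.card * ((N : ℝ) / ((t : ℝ) * G) + 1) := by
    have h1 : B.card ≤ ∑ p ∈ q.primeFactors, (D p).card :=
      (Finset.card_le_card hBsub).trans Finset.card_biUnion_le
    calc (B.card : ℝ) ≤ ∑ p ∈ q.primeFactors, ((D p).card : ℝ) := by exact_mod_cast h1
      _ ≤ ∑ p ∈ q.primeFactors, ((N : ℝ) / ((t : ℝ) * G) + 1) := Finset.sum_le_sum hDcard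
      _ = _ := by rw [Finset.sum_const, nsmul_eq_mul]
  rw [hdiff, norm_neg]
  have hω := card_primeFactors_le q hq ε hε
  calc ‖∑ n ∈ B, f n‖ ≤ ∑ n ∈ B, c * (N : ℝ) ^ ε := by
        apply norm_sum_le_of_le
        intro n hn
        simp only [hB, Finset.mem_filter, Finset.mem_Icc] at hn
        refine (hfc n hn.1.1).trans ?_
        have : (n : ℝ) ≤ N := by exact_mod_cast hn.1.2
        gcongr
    _ = B.card * (c * (N : ℝ) ^ ε) := by rw [Finset.sum_const, nsmul_eq_mul]
    _ ≤ (((1 / (ε * Real.log 2)) * (q : ℝ) ^ ε) * ((N : ℝ) / ((t : ℝ) * G) + 1))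
          * (c * (N : ℝ) ^ ε) := by
        gcongr
        refine hBcard.trans ?_
        gcongr
    _ = _ := by
        push_cast
        rw [Real.mul_rpow (by positivity) (by positivity)]
        ring
end

section
/- Let f be a sieve function of range D ≪ N, let t be a positive integer all of whose prime factors exceed G (i.e. gcd(t, P(G)) = 1), and let h be an integer with 0 < |h| ≤ G. Then Σ_{n ≤ N, n ≡ −h (mod t)} f(n) = (N/t)·𝑓̂(1) + O_ε(D^ε·(N·t^ε/(tG) + D)) for every ε > 0, uniformly in such h. -/
lemma aux_count (N d t : ℕ) (hd : 0 < d) (ht : 0 < t) (h : ℤ) (hc : Nat.Coprime d t) :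
    |(((Finset.Icc 1 N).filter (fun n : ℕ => (n : ℤ) ≡ -h [ZMOD (t : ℤ)] ∧ d ∣ n)).card : ℝ)
      - (N : ℝ) / t / d| ≤ 1 := by
  obtain ⟨a, ha⟩ : ∃ a : ℕ, (a : ℤ) ≡ -h [ZMOD (t : ℤ)] := by
    have htz : (0 : ℤ) < t := by exact_mod_cast ht
    refine ⟨((-h) % t).toNat, ?_⟩
    rw [Int.toNat_of_nonneg (Int.emod_nonneg _ htz.ne')]
    exact Int.mod_modEq _ _
  obtain ⟨r, hr1, hr2⟩ := Nat.chineseRemainder hc 0 a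
  have hset : (Finset.Icc 1 N).filter (fun n : ℕ => (n : ℤ) ≡ -h [ZMOD (t : ℤ)] ∧ d ∣ n)
      = (Finset.Ioc 0 N).filter (fun n : ℕ => n ≡ r [MOD (d * t)]) := by
    ext n
    simp only [Finset.mem_filter, Finset.mem_Icc, Finset.mem_Ioc]
    have h1 : ((n : ℤ) ≡ -h [ZMOD (t : ℤ)]) ↔ n ≡ r [MOD t] := by
      constructor
      · intro h2
        exact (Int.natCast_modEq_iff.1 (h2.trans ha.symm)).trans hr2.symm
      · intro h2
        exact (Int.natCast_modEq_iff.2 (h2.trans hr2)).trans ha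
    have h3 : d ∣ n ↔ n ≡ r [MOD d] := by
      rw [← Nat.modEq_zero_iff_dvd]
      exact ⟨fun h2 => h2.trans hr1.symm, fun h2 => h2.trans hr1⟩
    rw [h1, h3, ← Nat.modEq_and_modEq_iff_modEq_mul hc, Nat.succ_le_iff]
    tauto
  rw [hset]
  have hpos : 0 < d * t := Nat.mul_pos hd ht
  have hcard := Nat.Ioc_filter_modEq_card 0 N hpos r
  set k := ((Finset.Ioc 0 N).filter (fun n : ℕ => n ≡ r [MOD (d * t)])).card with hk
  set x : ℚ := ((N : ℚ) - r) / ((d * t : ℕ) : ℚ) with hx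
  set y : ℚ := (((0 : ℕ) : ℚ) - r) / ((d * t : ℕ) : ℚ) with hy
  have hposq : (0 : ℚ) < ((d * t : ℕ) : ℚ) := by exact_mod_cast hpos
  have hxy : x - y = (N : ℚ) / t / d := by
    have : (d : ℚ) ≠ 0 := by positivity
    have : (t : ℚ) ≠ 0 := by positivity
    rw [hx, hy]; push_cast; field_simp; ring
  have hle : y ≤ x := by
    have : (0 : ℚ) ≤ (N : ℚ) / t / d := by positivity
    linarith
  rw [max_eq_left (sub_nonneg.2 (Int.floor_le_floor hle))] at hcard
  have hq : |(k : ℚ) - (N : ℚ) / t / d| ≤ 1 := by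
    have hkq : (k : ℚ) = (⌊x⌋ : ℚ) - ⌊y⌋ := by exact_mod_cast hcard
    rw [hkq, ← hxy, abs_le]
    have := Int.floor_le x
    have := Int.lt_floor_add_one x
    have := Int.floor_le y
    have := Int.lt_floor_add_one y
    constructor <;> linarith
  have : ((|(k : ℚ) - (N : ℚ) / t / d| : ℚ) : ℝ) ≤ ((1 : ℚ) : ℝ) := by exact_mod_cast hq
  push_cast at this
  exact this

lemma aux_prime_gt (G t p : ℕ) (hc : Nat.Coprime t (primesProd G)) (hp : p.Prime)
    (hpt : p ∣ t) : G < p := by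
  by_contra hlt
  have : p ∣ primesProd G :=
    Finset.dvd_prod_of_mem (fun q : ℕ => q)
      (Finset.mem_filter.2 ⟨Finset.mem_Icc.2 ⟨hp.one_lt.le, not_lt.1 hlt⟩, hp⟩)
  exact Nat.not_coprime_of_dvd_of_dvd hp.one_lt hpt this hc

lemma aux_bound (N D G d t : ℕ) (hd : 0 < d) (ht : 0 < t) (h : ℤ)
    (hc : Nat.Coprime t (primesProd G)) (h0 : h ≠ 0) (hG : |h| ≤ (G : ℤ)) :
    |(((Finset.Icc 1 N).filter (fun n : ℕ => (n : ℤ) ≡ -h [ZMOD (t : ℤ)] ∧ d ∣ n)).card : ℝ)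
      - (N : ℝ) / t / d| ≤
      1 + (N : ℝ) / t * ∑ p ∈ t.primeFactors, if p ∣ d then (1 : ℝ) / d else 0 := by
  have hnn : ∀ p ∈ t.primeFactors, (0 : ℝ) ≤ if p ∣ d then (1 : ℝ) / d else 0 := by
    intro p _; split_ifs <;> positivity
  by_cases hdt : Nat.Coprime d t
  · have := aux_count N d t hd ht h hdt
    have h2 : (0 : ℝ) ≤ (N : ℝ) / t * ∑ p ∈ t.primeFactors, if p ∣ d then (1 : ℝ) / d else 0 :=
      mul_nonneg (by positivity) (Finset.sum_nonneg hnn)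
    linarith
  · obtain ⟨p, hp, hpd, hpt⟩ := Nat.Prime.not_coprime_iff_dvd.1 hdt
    have hgt := aux_prime_gt G t p hc hp hpt
    have hemp : (Finset.Icc 1 N).filter
        (fun n : ℕ => (n : ℤ) ≡ -h [ZMOD (t : ℤ)] ∧ d ∣ n) = ∅ := by
      rw [Finset.filter_eq_empty_iff]
      rintro n - ⟨h1, h2⟩
      have h3 : (p : ℤ) ∣ n := by exact_mod_cast hpd.trans h2
      have h4 : (p : ℤ) ∣ -h - n := (Int.natCast_dvd_natCast.2 hpt).trans h1.dvd
      have h5 : (p : ℤ) ∣ h := by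
        have := (h4.add h3)
        simpa using this
      have h6 := Int.le_of_dvd (abs_pos.2 h0) ((dvd_abs _ _).2 h5)
      have : (G : ℤ) < p := by exact_mod_cast hgt
      linarith
    rw [hemp]
    have h7 : (1 : ℝ) / d ≤ ∑ p ∈ t.primeFactors, if p ∣ d then (1 : ℝ) / d else 0 := by
      have := Finset.single_le_sum hnn (Nat.mem_primeFactors.2 ⟨hp, hpt, ht.ne'⟩)
      simpa [hpd] using this
    have h8 : (N : ℝ) / t / d = (N : ℝ) / t * (1 / d) := by ring
    simp only [Finset.card_empty, Nat.cast_zero, zero_sub, abs_neg]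
    rw [abs_of_nonneg (by positivity), h8]
    have := mul_le_mul_of_nonneg_left h7 (by positivity : (0 : ℝ) ≤ (N : ℝ) / t)
    linarith

lemma aux_inner (D p : ℕ) (hp : 0 < p) :
    (∑ d ∈ Finset.Icc 1 D, if p ∣ d then (1 : ℝ) / d else 0) ≤ 1 / p * (1 + Real.log D) := by
  rw [← Finset.sum_filter]
  have hsub : (Finset.Icc 1 D).filter (fun d => p ∣ d) ⊆ (Finset.Icc 1 D).image (fun k => p * k) := by
    intro d hd
    simp only [Finset.mem_filter, Finset.mem_Icc] at hd
    obtain ⟨⟨h1, h2⟩, k, rfl⟩ := hd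
    refine Finset.mem_image.2 ⟨k, Finset.mem_Icc.2 ⟨?_, ?_⟩, rfl⟩
    · exact Nat.pos_of_mul_pos_left h1
    · exact (Nat.le_mul_of_pos_left k hp).trans h2
  calc _ ≤ ∑ d ∈ (Finset.Icc 1 D).image (fun k => p * k), (1 : ℝ) / d :=
        Finset.sum_le_sum_of_subset_of_nonneg hsub (fun _ _ _ => by positivity)
    _ = ∑ k ∈ Finset.Icc 1 D, (1 : ℝ) / ((p * k : ℕ) : ℝ) :=
        Finset.sum_image (fun a _ b _ hab => Nat.eq_of_mul_eq_mul_left hp hab)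
    _ = 1 / p * ((harmonic D : ℚ) : ℝ) := by
        rw [harmonic_eq_sum_Icc]
        push_cast
        rw [Finset.mul_sum]
        refine Finset.sum_congr rfl fun k _ => ?_
        rw [one_div, mul_inv, one_div]
    _ ≤ _ := mul_le_mul_of_nonneg_left (harmonic_le_one_add_log D) (by positivity)

lemma aux_omega (t : ℕ) (ht : 0 < t) (ε : ℝ) (hε : 0 < ε) :
    (t.primeFactors.card : ℝ) ≤ (t : ℝ) ^ ε / (ε * Real.log 2) := by
  have h1 : 2 ^ t.primeFactors.card ≤ t := by
    refine le_trans ?_ (Nat.le_of_dvd ht (Nat.prod_primeFactors_dvd t))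
    exact Finset.pow_card_le_prod _ _ _ (fun p hp => (Nat.prime_of_mem_primeFactors hp).two_le)
  have h2 : (2 : ℝ) ^ t.primeFactors.card ≤ t := by exact_mod_cast h1
  have h3 := Real.log_le_log (by positivity) h2
  rw [Real.log_pow] at h3
  have h4 := Real.log_le_rpow_div (Nat.cast_nonneg t : (0 : ℝ) ≤ t) hε
  have hl : 0 < Real.log 2 := Real.log_pos (by norm_num)
  rw [← div_div, le_div_iff₀ hl]
  linarith

lemma aux_swap (f' : ℕ → ℂ) (N D t : ℕ) (h : ℤ) :
    (∑ n ∈ Finset.Icc 1 N,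
      if (n : ℤ) ≡ -h [ZMOD (t : ℤ)] then ∑ d ∈ n.divisors.filter (· ≤ D), f' d else 0)
    = ∑ d ∈ Finset.Icc 1 D, f' d *
      (((Finset.Icc 1 N).filter
        (fun n : ℕ => (n : ℤ) ≡ -h [ZMOD (t : ℤ)] ∧ d ∣ n)).card : ℂ) := by
  have h1 : ∀ n ∈ Finset.Icc 1 N,
      (if (n : ℤ) ≡ -h [ZMOD (t : ℤ)] then ∑ d ∈ n.divisors.filter (· ≤ D), f' d else 0)
      = ∑ d ∈ Finset.Icc 1 D, if (n : ℤ) ≡ -h [ZMOD (t : ℤ)] ∧ d ∣ n then f' d else 0 := by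
    intro n hn
    have hn1 := (Finset.mem_Icc.1 hn).1
    have hs : n.divisors.filter (· ≤ D) = (Finset.Icc 1 D).filter (fun d => d ∣ n) := by
      ext d
      simp only [Finset.mem_filter, Nat.mem_divisors, Finset.mem_Icc]
      constructor
      · rintro ⟨⟨h2, _⟩, h3⟩
        exact ⟨⟨Nat.pos_of_dvd_of_pos h2 hn1, h3⟩, h2⟩
      · rintro ⟨⟨_, h3⟩, h2⟩
        exact ⟨⟨h2, by omega⟩, h3⟩
    rw [hs, Finset.sum_filter]
    by_cases hP : (n : ℤ) ≡ -h [ZMOD (t : ℤ)] <;> simp [hP]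
  rw [Finset.sum_congr rfl h1, Finset.sum_comm]
  refine Finset.sum_congr rfl fun d _ => ?_
  rw [← Finset.sum_filter, Finset.sum_const, nsmul_eq_mul, mul_comm]

/-- formula (33): let `f` be a sieve function of range `D ≪ N`,
i.e. `f(n) = ∑_{d ∣ n, d ≤ D} f'(d)` with `f'` essentially bounded, let `t` be
a positive integer all of whose prime factors exceed `G`
(`gcd(t, P(G)) = 1`), and let `h` be an integer with `0 < |h| ≤ G`.  Then
`∑_{n ≤ N, n ≡ −h (mod t)} f(n) = (N/t) f̂(1) + O_ε(D^ε (N t^ε/(tG) + D))`,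
uniformly in such `h`, where `f̂(1) = ∑_{m ≤ D} f'(m)/m`. -/
theorem sifted_modulus_progression_formula
    (f' : ℕ → ℂ)
    (hf' : ∀ ε : ℝ, 0 < ε → ∃ c : ℝ, 0 < c ∧ ∀ q : ℕ, 1 ≤ q → ‖f' q‖ ≤ c * (q : ℝ) ^ ε)
    (ε : ℝ) (hε : 0 < ε) (A : ℝ) (hA : 0 < A) :
    ∃ C : ℝ, 0 < C ∧ ∀ (N D G t : ℕ) (h : ℤ), 0 < N → 0 < D → 0 < G → 0 < t →
      (D : ℝ) ≤ A * N → Nat.Coprime t (primesProd G) → h ≠ 0 → |h| ≤ (G : ℤ) →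
      ‖(∑ n ∈ Finset.Icc 1 N,
            if (n : ℤ) ≡ -h [ZMOD (t : ℤ)] then ∑ d ∈ n.divisors.filter (· ≤ D), f' d else 0)
          - ((N : ℂ) / (t : ℂ)) * ∑ m ∈ Finset.Icc 1 D, f' m / (m : ℂ)‖
        ≤ C * (D : ℝ) ^ ε * ((N : ℝ) * (t : ℝ) ^ ε / ((t : ℝ) * G) + D) := by
  obtain ⟨c, hc0, hc⟩ := hf' (ε / 2) (by linarith)
  have hl : 0 < Real.log 2 := Real.log_pos (by norm_num)
  set K : ℝ := (1 + 1 / (ε / 2)) / (ε * Real.log 2) with hK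
  have hK0 : 0 < K := by positivity
  refine ⟨c * (1 + K), by positivity, ?_⟩
  intro N D G t h hN hD hG ht _ hcop h0 hhG
  have hDr : (1 : ℝ) ≤ D := by exact_mod_cast hD
  have htr : (0 : ℝ) < t := by exact_mod_cast ht
  have hGr : (0 : ℝ) < G := by exact_mod_cast hG
  rw [aux_swap, Finset.mul_sum, ← Finset.sum_sub_distrib]
  have hterm : ∀ d ∈ Finset.Icc 1 D,
      ‖f' d * (((Finset.Icc 1 N).filter
        (fun n : ℕ => (n : ℤ) ≡ -h [ZMOD (t : ℤ)] ∧ d ∣ n)).card : ℂ)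
        - (N : ℂ) / t * (f' d / d)‖ ≤
      c * (D : ℝ) ^ (ε / 2) *
        (1 + (N : ℝ) / t * ∑ p ∈ t.primeFactors, if p ∣ d then (1 : ℝ) / d else 0) := by
    intro d hd
    obtain ⟨hd1, hdD⟩ := Finset.mem_Icc.1 hd
    have hb := aux_bound N D G d t hd1 ht h hcop h0 hhG
    set k := ((Finset.Icc 1 N).filter
        (fun n : ℕ => (n : ℤ) ≡ -h [ZMOD (t : ℤ)] ∧ d ∣ n)).card with hk
    have he : f' d * (k : ℂ) - (N : ℂ) / t * (f' d / d)
        = f' d * (((k : ℝ) - (N : ℝ) / t / d : ℝ) : ℂ) := by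
      push_cast; ring
    rw [he, norm_mul, Complex.norm_real, Real.norm_eq_abs]
    have hfd : ‖f' d‖ ≤ c * (D : ℝ) ^ (ε / 2) := by
      refine (hc d hd1).trans ?_
      have : (d : ℝ) ≤ D := by exact_mod_cast hdD
      gcongr
    exact mul_le_mul hfd hb (abs_nonneg _) (by positivity)
  refine (norm_sum_le_of_le _ hterm).trans ?_
  rw [← Finset.mul_sum, Finset.sum_add_distrib, ← Finset.mul_sum, Finset.sum_comm]
  simp only [Finset.sum_const, Nat.card_Icc, nsmul_eq_mul, mul_one, Nat.add_sub_cancel]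
  have hlog : 1 + Real.log D ≤ (1 + 1 / (ε / 2)) * (D : ℝ) ^ (ε / 2) := by
    have h1 := Real.log_le_rpow_div (by linarith : (0 : ℝ) ≤ D) (by linarith : 0 < ε / 2)
    have h2 : (1 : ℝ) ≤ (D : ℝ) ^ (ε / 2) := Real.one_le_rpow hDr (by linarith)
    rw [add_mul, one_mul, one_div, mul_comm (ε / 2)⁻¹, ← div_eq_mul_inv]
    linarith
  have hlog0 : 0 ≤ 1 + Real.log D := by
    have := Real.log_nonneg hDr
    linarith
  have hsum : (∑ p ∈ t.primeFactors, ∑ d ∈ Finset.Icc 1 D, if p ∣ d then (1 : ℝ) / d else 0)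
      ≤ K * (t : ℝ) ^ ε / G * (D : ℝ) ^ (ε / 2) := by
    have h1 : ∀ p ∈ t.primeFactors,
        (∑ d ∈ Finset.Icc 1 D, if p ∣ d then (1 : ℝ) / d else 0)
          ≤ 1 / (G : ℝ) * (1 + Real.log D) := by
      intro p hp
      have hpp := Nat.prime_of_mem_primeFactors hp
      have hgt := aux_prime_gt G t p hcop hpp (Nat.dvd_of_mem_primeFactors hp)
      refine (aux_inner D p hpp.pos).trans ?_
      have : (G : ℝ) ≤ p := by exact_mod_cast hgt.le
      gcongr
    refine (Finset.sum_le_card_nsmul _ _ _ h1).trans ?_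
    rw [nsmul_eq_mul]
    calc (t.primeFactors.card : ℝ) * (1 / (G : ℝ) * (1 + Real.log D))
        ≤ ((t : ℝ) ^ ε / (ε * Real.log 2)) *
          (1 / (G : ℝ) * ((1 + 1 / (ε / 2)) * (D : ℝ) ^ (ε / 2))) := by
          have := aux_omega t ht ε hε
          gcongr
      _ = _ := by rw [hK]; ring
  have hDD : (D : ℝ) ^ (ε / 2) * (D : ℝ) ^ (ε / 2) = (D : ℝ) ^ ε := by
    rw [← Real.rpow_add (by linarith)]; congr 1; ring
  have hDle : (D : ℝ) ^ (ε / 2) ≤ (D : ℝ) ^ ε :=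
    Real.rpow_le_rpow_of_exponent_le hDr (by linarith)
  set X : ℝ := (N : ℝ) * (t : ℝ) ^ ε / ((t : ℝ) * G) with hX
  have hX0 : 0 ≤ X := by positivity
  have hDe : 0 ≤ (D : ℝ) ^ ε := by positivity
  calc _ ≤ c * (D : ℝ) ^ (ε / 2) *
          ((D : ℝ) + (N : ℝ) / t * (K * (t : ℝ) ^ ε / G * (D : ℝ) ^ (ε / 2))) := by
        gcongr
    _ = c * ((D : ℝ) ^ (ε / 2) * D +
          K * ((D : ℝ) ^ (ε / 2) * (D : ℝ) ^ (ε / 2)) * X) := by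
        rw [hX]; field_simp
    _ ≤ c * ((D : ℝ) ^ ε * D + K * (D : ℝ) ^ ε * X) := by
        rw [hDD]; gcongr
    _ ≤ c * (1 + K) * (D : ℝ) ^ ε * (X + D) := by
        have e : c * (1 + K) * (D : ℝ) ^ ε * (X + D) = c * ((D : ℝ) ^ ε * D + K * (D : ℝ) ^ ε * X)
          + (c * (D : ℝ) ^ ε * X + c * K * (D : ℝ) ^ ε * D) := by ring
        rw [e]
        have : 0 ≤ c * (D : ℝ) ^ ε * X + c * K * (D : ℝ) ^ ε * D := by positivity
        linarith
end
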